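/- Let S be a commutative ring with a ring endomorphism σ, and let R be a subring of S with σ(R) ⊆ R. Assume: (i) S is finitely σ-generated over R, i.e., there is a finite subset T ⊆ S such that S is generated as an R-algebra by {σ^n(x) | x ∈ T, n ≥ 0}; (ii) R is an integral domain and σ restricted to R is injective; and (iii) the zero ideal of S is a finite intersection of σ-pseudo prime ideals of S. Then there exist a nonzero element r ∈ R and an integer l ≥ 1 such that for every d ≥ 1 and every prime ideal q of R satisfying (σ^d)^{-1}(q) ∩ R = q and σ^n(r) ∉ q for all n ≥ 0, there exists a prime ideal q' of S with (σ^{ld})^{-1}(q') = q' and q' ∩ R = q. -/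

import Mathlib

/-- An ideal `p` of a ring with endomorphism `σ` is `σ`-pseudo prime if
`p = q ∩ σ⁻¹(q) ∩ … ∩ σ^{-(d-1)}(q)` for some `d ≥ 1` and some `σ^d`-prime ideal `q`
(i.e. a prime ideal `q` with `(σ^d)⁻¹(q) = q`). -/
def PseudoPrime {R : Type*} [CommRing R] (σ : R →+* R) (p : Ideal R) : Prop :=
  ∃ d : ℕ, 1 ≤ d ∧ ∃ q : Ideal R, q.IsPrime ∧ Ideal.comap (σ ^ d) q = q ∧
    p = ⨅ i ∈ Finset.range d, Ideal.comap (σ ^ i) q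

open Polynomial

section Lift

theorem exists_injective_ringHom_comp_eq {A E M : Type*} [CommRing A] [IsDomain A] [CommRing E]
    [IsDomain E] [Field M] [IsAlgClosed M] [Algebra A E] [FaithfulSMul A E]
    [Algebra.IsAlgebraic A E] (f : A →+* M) (hf : Function.Injective f) :
    ∃ g : E →+* M, Function.Injective g ∧ g.comp (algebraMap A E) = f := by
  let := f.toAlgebra
  have : FaithfulSMul A M := (faithfulSMul_iff_algebraMap_injective A M).mpr hf
  let g : E →ₐ[A] M := IsAlgClosed.lift
  refine ⟨g, (injective_iff_map_eq_zero _).mpr fun e he ↦ ?_, RingHom.ext g.commutes⟩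
  by_contra he0
  obtain ⟨a, ha, b, hb⟩ := (Algebra.IsAlgebraic.isAlgebraic (R := A) e).exists_nonzero_dvd
    (mem_nonZeroDivisors_of_ne_zero he0)
  refine ha (hf ?_)
  calc f a = g (algebraMap A E a) := (g.commutes a).symm
    _ = g e * g b := by rw [hb, map_mul]
    _ = f 0 := by rw [map_zero]; exact mul_eq_zero_of_left he _

end Lift

section Algebraic

variable {A B L : Type*} [CommRing A] [CommRing B] [Field L]

theorem eval₂_eq_zero_of_minimal_natDegree {ι : A →+* B} (hι : Function.Injective ι) {y : B}
    {G : A[X]} (hG : G.eval₂ ι y = 0)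
    (hmin : ∀ f : A[X], f ≠ 0 → f.eval₂ ι y = 0 → G.natDegree ≤ f.natDegree)
    (ψ : A →+* L) (hlc : ψ G.leadingCoeff ≠ 0) {α : L} (hα : G.eval₂ ψ α = 0)
    (f : A[X]) (hf : f.eval₂ ι y = 0) : f.eval₂ ψ α = 0 := by
  induction hn : f.natDegree using Nat.strong_induction_on generalizing f with
  | _ n ih =>
    subst hn
    by_cases hf0 : f = 0
    · simp [hf0]
    have hle := hmin f hf0 hf
    have hpos : 0 < f.natDegree := by
      by_contra hlt
      have hC := eq_C_of_natDegree_eq_zero (by omega : f.natDegree = 0)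
      rw [hC, eval₂_C, map_eq_zero_iff ι hι] at hf
      exact hf0 (by rw [hC, hf, C_0])
    have key := ih _ (natDegree_cancelLeads_lt_of_natDegree_le_natDegree hle hpos)
      (G.cancelLeads f) (by simp [cancelLeads, eval₂_mul, hf, hG]) rfl
    simpa [cancelLeads, eval₂_mul, hα, hlc, tsub_eq_zero_iff_le.mpr hle] using key

theorem exists_ringHom_extension {ι : A →+* B} (hι : Function.Injective ι) {y : B}
    (hy : ∀ b, ∃ f : A[X], f.eval₂ ι y = b) {G : A[X]} (hG : G.eval₂ ι y = 0)
    (hmin : ∀ f : A[X], f ≠ 0 → f.eval₂ ι y = 0 → G.natDegree ≤ f.natDegree)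
    (ψ : A →+* L) (hlc : ψ G.leadingCoeff ≠ 0) {α : L} (hα : G.eval₂ ψ α = 0) :
    ∃ ψ' : B →+* L, (∀ a, ψ' (ι a) = ψ a) ∧ ψ' y = α := by
  let g : {g : A[X] →+* L // RingHom.ker (eval₂RingHom ι y) ≤ RingHom.ker g} :=
    ⟨eval₂RingHom ψ α, fun f hf ↦
      eval₂_eq_zero_of_minimal_natDegree hι hG hmin ψ hlc hα f hf⟩
  have key (f : A[X]) := (eval₂RingHom ι y).liftOfSurjective_comp_apply hy g f
  refine ⟨(eval₂RingHom ι y).liftOfSurjective hy g, fun a ↦ ?_, ?_⟩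
  · simpa [g] using key (C a)
  · simpa [g] using key X

/-- Boundedness of the number of primes over a given prime in a generically finite extension. -/
theorem exists_bound_primes_over [Algebra A B] [IsDomain A] [IsDomain B] [FaithfulSMul A B]
    [Algebra.IsAlgebraic A B] [Algebra.FiniteType A B] :
    ∃ p : A, p ≠ 0 ∧ ∃ N : ℕ, ∀ P : Ideal A, P.IsPrime → p ∉ P →
      ∀ Q : Fin (N + 1) → Ideal B, (∀ i, (Q i).IsPrime) →
        (∀ i, (Q i).comap (algebraMap A B) = P) → ∃ i j, i < j ∧ Q i = Q j := by
  obtain ⟨s, hs⟩ := Algebra.FiniteType.out (R := A) (A := B)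
  have halg (b : B) : IsAlgebraic A b := Algebra.IsAlgebraic.isAlgebraic b
  choose f hf0 hf using halg
  let g : A[X] := ∏ b ∈ s, f b
  have hg0 : g ≠ 0 := Finset.prod_ne_zero_iff.mpr fun b _ ↦ hf0 b
  have hg (b : B) (hb : b ∈ s) : aeval b g = 0 := by
    simp only [g, map_prod]
    exact Finset.prod_eq_zero hb (hf b)
  refine ⟨g.leadingCoeff, by simpa, g.natDegree ^ s.card, fun P hP hp Q hQ hQP ↦ ?_⟩
  classical
  let Ω := AlgebraicClosure (FractionRing (A ⧸ P))
  let θ' : A ⧸ P →+* Ω := (algebraMap (FractionRing (A ⧸ P)) Ω).comp (algebraMap (A ⧸ P) _)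
  have hθ' : Function.Injective θ' :=
    (algebraMap (FractionRing (A ⧸ P)) Ω).injective.comp (IsFractionRing.injective _ _)
  let θ : A →+* Ω := θ'.comp (Ideal.Quotient.mk P)
  have hθ (a : A) : θ a = 0 ↔ a ∈ P := by
    rw [← Ideal.Quotient.eq_zero_iff_mem, ← map_eq_zero_iff θ' hθ']
    rfl
  have hgθ : g.map θ ≠ 0 := fun h ↦ hp <| (hθ _).mp <| by
    rw [leadingCoeff, ← coeff_map, h, coeff_zero]
  have hlift (i) : ∃ ψ : B →+* Ω, RingHom.ker ψ = Q i ∧ ∀ a, ψ (algebraMap A B a) = θ a := by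
    have := hQ i
    have : (Q i).LiesOver P := ⟨(hQP i).symm⟩
    have halg (b : B) : IsAlgebraic (A ⧸ P) (Ideal.Quotient.mk (Q i) b) := by
      have hb : b ∈ Algebra.adjoin A (s : Set B) := hs ▸ trivial
      induction hb using Algebra.adjoin_induction with
      | mem b hb =>
        refine ⟨g.map (Ideal.Quotient.mk P), fun h ↦ hgθ ?_, ?_⟩
        · rw [← Polynomial.map_map, h, Polynomial.map_zero]
        · rw [aeval_def, eval₂_map]
          have := hom_eval₂ g (algebraMap A B) (Ideal.Quotient.mk (Q i)) b
          rw [← aeval_def, hg b hb, map_zero] at this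
          exact this.symm
      | algebraMap a => exact isAlgebraic_algebraMap (Ideal.Quotient.mk P a)
      | add x y _ _ hx hy => exact map_add (Ideal.Quotient.mk (Q i)) x y ▸ hx.add hy
      | mul x y _ _ hx hy => exact map_mul (Ideal.Quotient.mk (Q i)) x y ▸ hx.mul hy
    have : Algebra.IsAlgebraic (A ⧸ P) (B ⧸ Q i) :=
      ⟨fun b ↦ by obtain ⟨b, rfl⟩ := Ideal.Quotient.mk_surjective b; exact halg b⟩
    obtain ⟨ψ, hinj, hψ⟩ := exists_injective_ringHom_comp_eq (E := B ⧸ Q i) θ' hθ'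
    refine ⟨ψ.comp (Ideal.Quotient.mk _), ?_, fun a ↦ congrArg (· (Ideal.Quotient.mk P a)) hψ⟩
    rw [← RingHom.comap_ker, (RingHom.injective_iff_ker_eq_bot ψ).mp hinj]
    exact Ideal.mk_ker
  choose ψ hker hψ using hlift
  let roots : Finset Ω := (g.map θ).roots.toFinset
  have hmaps (i) (b : s) : ψ i b ∈ roots := by
    simp only [roots, Multiset.mem_toFinset, mem_roots hgθ, IsRoot.def, eval_map]
    have : θ = (ψ i).comp (algebraMap A B) := RingHom.ext fun a ↦ (hψ i a).symm
    rw [this, ← hom_eval₂, ← aeval_def, hg _ b.2, map_zero]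
  have hcard : Fintype.card (s → roots) < Fintype.card (Fin (g.natDegree ^ s.card + 1)) := by
    simp only [Fintype.card_fun, Fintype.card_coe, Fintype.card_fin, Nat.lt_succ_iff]
    gcongr
    exact (Multiset.toFinset_card_le _).trans ((card_roots' _).trans natDegree_map_le)
  obtain ⟨i, j, hij, h⟩ := Fintype.exists_ne_map_eq_of_card_lt
    (fun i (b : s) ↦ (⟨ψ i b, hmaps i b⟩ : roots)) hcard
  have hψeq : ψ i = ψ j := by
    ext b
    have hb : b ∈ Algebra.adjoin A (s : Set B) := hs ▸ trivial
    induction hb using Algebra.adjoin_induction with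
    | mem x hx => simpa using congrFun h ⟨x, hx⟩
    | algebraMap a => rw [hψ, hψ]
    | add x y _ _ hx hy => rw [map_add, map_add, hx, hy]
    | mul x y _ _ hx hy => rw [map_mul, map_mul, hx, hy]
  have hQeq : Q i = Q j := by rw [← hker, ← hker, hψeq]
  rcases hij.lt_or_gt with h | h
  exacts [⟨i, j, h, hQeq⟩, ⟨j, i, h, hQeq.symm⟩]

end Algebraic

section Fields

theorem AlgebraicIndependent.algebraicIndependent_succ {F L : Type*} [Field F] [Field L]
    [Algebra F L] {n : ℕ} {x : ℕ → L} (h : AlgebraicIndependent F fun i : Fin n ↦ x i)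
    (h0 : IsAlgebraic (Algebra.adjoin F (Set.range fun i : Fin n ↦ x (i + 1))) (x 0)) :
    AlgebraicIndependent F fun i : Fin n ↦ x (i + 1) := by
  cases n with
  | zero => convert! h using 1
  | succ n =>
    have hx : AlgebraicIndependent F fun i : Fin n ↦ x (i + 1) := by
      simpa [Function.comp_def] using h.comp Fin.succ (Fin.succ_injective n)
    have h0' : Transcendental (Algebra.adjoin F (Set.range fun i : Fin n ↦ x (i + 1))) (x 0) := by
      rw [← hx.option_iff_transcendental]
      convert! (algebraicIndependent_equiv (finSuccEquiv n).symm).mpr h using 1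
      ext (_ | i) <;> simp
    have hn : Transcendental (Algebra.adjoin F (Set.range fun i : Fin n ↦ x (i + 1)))
        (x (n + 1)) := by
      refine fun hn ↦ h0' (h0.adjoin_of_forall_isAlgebraic ?_)
      rintro _ ⟨⟨i, rfl⟩, hi⟩
      induction i using Fin.lastCases with
      | last => simpa using hn
      | cast i => exact absurd ⟨i, rfl⟩ hi
    rw [← hx.option_iff_transcendental] at hn
    convert! (algebraicIndependent_equiv finSuccEquivLast).mpr hn using 1
    ext i
    induction i using Fin.lastCases <;> simp

end Fields

section Orbit

variable {R S L : Type*} [CommRing R] [CommRing S] [Algebra R S] [Field L]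

/-- The subalgebra generated by the first `k` terms of a sequence. -/
def truncAdjoin (R : Type*) {S : Type*} [CommRing R] [CommRing S] [Algebra R S] (y : ℕ → S)
    (k : ℕ) : Subalgebra R S :=
  Algebra.adjoin R (Set.range fun i : Fin k ↦ y i)

variable {y : ℕ → S}

theorem mem_truncAdjoin {i k : ℕ} (h : i < k) : y i ∈ truncAdjoin R y k :=
  Algebra.subset_adjoin ⟨⟨i, h⟩, rfl⟩

theorem truncAdjoin_mono {k l : ℕ} (h : k ≤ l) : truncAdjoin R y k ≤ truncAdjoin R y l := by
  refine Algebra.adjoin_le ?_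
  rintro _ ⟨i, rfl⟩
  exact mem_truncAdjoin (i.2.trans_le h)

theorem exists_mem_truncAdjoin (hgen : Algebra.adjoin R (Set.range y) = ⊤) (x : S) :
    ∃ k, x ∈ truncAdjoin R y k := by
  have hx : x ∈ Algebra.adjoin R (Set.range y) := hgen ▸ trivial
  induction hx using Algebra.adjoin_induction with
  | mem x hx =>
    obtain ⟨i, rfl⟩ := hx
    exact ⟨i + 1, mem_truncAdjoin i.lt_succ_self⟩
  | algebraMap r => exact ⟨0, Subalgebra.algebraMap_mem _ r⟩
  | add x x' _ _ hx hx' =>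
    obtain ⟨k, hk⟩ := hx
    obtain ⟨k', hk'⟩ := hx'
    exact ⟨max k k', add_mem (truncAdjoin_mono (le_max_left _ _) hk)
      (truncAdjoin_mono (le_max_right _ _) hk')⟩
  | mul x x' _ _ hx hx' =>
    obtain ⟨k, hk⟩ := hx
    obtain ⟨k', hk'⟩ := hx'
    exact ⟨max k k', mul_mem (truncAdjoin_mono (le_max_left _ _) hk)
      (truncAdjoin_mono (le_max_right _ _) hk')⟩

theorem truncAdjoin_ringHom_ext {k : ℕ} {φ ψ : truncAdjoin R y k →+* L}
    (h : ∀ r : R, φ (algebraMap R _ r) = ψ (algebraMap R _ r))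
    (h' : ∀ i (hi : i < k), φ ⟨y i, mem_truncAdjoin hi⟩ = ψ ⟨y i, mem_truncAdjoin hi⟩) :
    φ = ψ := by
  ext ⟨x, hx⟩
  induction hx using Algebra.adjoin_induction with
  | mem x hx => obtain ⟨i, rfl⟩ := hx; exact h' i i.2
  | algebraMap r => exact h r
  | add x x' hx hx' h h' =>
    exact (map_add φ ⟨x, hx⟩ ⟨x', hx'⟩).trans
      ((congrArg₂ _ h h').trans (map_add ψ ⟨x, hx⟩ ⟨x', hx'⟩).symm)
  | mul x x' hx hx' h h' =>
    exact (map_mul φ ⟨x, hx⟩ ⟨x', hx'⟩).trans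
      ((congrArg₂ _ h h').trans (map_mul ψ ⟨x, hx⟩ ⟨x', hx'⟩).symm)

theorem ringHom_ext_of_adjoin_range {T : Type*} [CommRing T]
    (hgen : Algebra.adjoin R (Set.range y) = ⊤) {φ ψ : S →+* T}
    (h : ∀ r : R, φ (algebraMap R S r) = ψ (algebraMap R S r))
    (h' : ∀ i, φ (y i) = ψ (y i)) : φ = ψ := by
  ext x
  have hx : x ∈ Algebra.adjoin R (Set.range y) := hgen ▸ trivial
  induction hx using Algebra.adjoin_induction with
  | mem x hx => obtain ⟨i, rfl⟩ := hx; exact h' i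
  | algebraMap r => exact h r
  | add x x' _ _ h h' => rw [map_add, map_add, h, h']
  | mul x x' _ _ h₁ h₂ => rw [map_mul, map_mul, h₁, h₂]

/-- A ring homomorphism on a truncation that restricts to `ρ` on the base and has prescribed
values on the generators. -/
structure IsPartialPoint (k : ℕ) (ρ : R →+* L) (α : ℕ → L) (φ : truncAdjoin R y k →+* L) :
    Prop where
  map_algebraMap : ∀ r : R, φ (algebraMap R _ r) = ρ r
  map_gen : ∀ i (hi : i < k), φ ⟨y i, mem_truncAdjoin hi⟩ = α i

theorem IsPartialPoint.unique {k : ℕ} {ρ : R →+* L} {α : ℕ → L} {φ ψ : truncAdjoin R y k →+* L}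
    (hφ : IsPartialPoint k ρ α φ) (hψ : IsPartialPoint k ρ α ψ) : φ = ψ :=
  truncAdjoin_ringHom_ext (fun r ↦ by rw [hφ.map_algebraMap, hψ.map_algebraMap])
    fun i hi ↦ by rw [hφ.map_gen i hi, hψ.map_gen i hi]

theorem exists_ringHom_of_isPartialPoint (hgen : Algebra.adjoin R (Set.range y) = ⊤)
    {ρ : R →+* L} {α : ℕ → L}
    (h : ∀ k, ∃ φ : truncAdjoin R y k →+* L, IsPartialPoint k ρ α φ) :
    ∃ φ : S →+* L, φ.comp (algebraMap R S) = ρ ∧ ∀ i, φ (y i) = α i := by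
  choose φ hφ using h
  let π : MvPolynomial ℕ R →+* S := (MvPolynomial.aeval y : MvPolynomial ℕ R →ₐ[R] S)
  have hπ : Function.Surjective π := by
    rw [Algebra.adjoin_range_eq_range_aeval] at hgen
    exact AlgHom.range_eq_top _ |>.mp hgen
  have hval (P : MvPolynomial ℕ R) : ∃ k₀, ∀ k, k₀ ≤ k → ∃ h : π P ∈ truncAdjoin R y k,
      φ k ⟨π P, h⟩ = MvPolynomial.eval₂Hom ρ α P := by
    induction P using MvPolynomial.induction_on with
    | C r =>
      have hr : π (MvPolynomial.C r) = algebraMap R S r := MvPolynomial.aeval_C y r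
      refine ⟨0, fun k _ ↦ ⟨hr ▸ Subalgebra.algebraMap_mem _ r, ?_⟩⟩
      rw [MvPolynomial.coe_eval₂Hom, MvPolynomial.eval₂_C, ← (hφ k).map_algebraMap]
      exact congrArg (φ k) (Subtype.ext hr)
    | add P Q hP hQ =>
      obtain ⟨k, hk⟩ := hP
      obtain ⟨l, hl⟩ := hQ
      refine ⟨max k l, fun n hn ↦ ?_⟩
      obtain ⟨h1, h2⟩ := hk n (le_of_max_le_left hn)
      obtain ⟨h3, h4⟩ := hl n (le_of_max_le_right hn)
      refine ⟨map_add π P Q ▸ add_mem h1 h3, ?_⟩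
      rw [map_add (MvPolynomial.eval₂Hom ρ α), ← h2, ← h4, ← map_add (φ n)]
      exact congrArg (φ n) (Subtype.ext (map_add π P Q))
    | mul_X P i hP =>
      obtain ⟨k, hk⟩ := hP
      have hX : π (MvPolynomial.X i) = y i := MvPolynomial.aeval_X y i
      refine ⟨max k (i + 1), fun n hn ↦ ?_⟩
      obtain ⟨h1, h2⟩ := hk n (le_of_max_le_left hn)
      have hi : i < n := le_of_max_le_right hn
      have hPX : π (P * MvPolynomial.X i) = π P * y i := by rw [map_mul, hX]
      refine ⟨hPX ▸ mul_mem h1 (mem_truncAdjoin hi), ?_⟩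
      rw [map_mul (MvPolynomial.eval₂Hom ρ α), ← h2, MvPolynomial.eval₂Hom_X',
        ← (hφ n).map_gen i hi, ← map_mul (φ n)]
      exact congrArg (φ n) (Subtype.ext hPX)
  have hker : RingHom.ker π ≤ RingHom.ker (MvPolynomial.eval₂Hom ρ α) := by
    intro P hP
    obtain ⟨k, hk⟩ := hval P
    obtain ⟨h1, h2⟩ := hk k le_rfl
    rw [RingHom.mem_ker, ← h2, ← map_zero (φ k)]
    exact congrArg (φ k) (Subtype.ext hP)
  have key := π.liftOfSurjective_comp_apply hπ ⟨_, hker⟩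
  refine ⟨π.liftOfSurjective hπ ⟨_, hker⟩, RingHom.ext fun r ↦ ?_, fun i ↦ ?_⟩
  · simpa [π] using key (MvPolynomial.C r)
  · simpa [π] using key (MvPolynomial.X i)

theorem exists_aeval_eq_of_mem_truncAdjoin_succ {k : ℕ} {x : S}
    (hx : x ∈ truncAdjoin R y (k + 1)) : ∃ f : (truncAdjoin R y k)[X], aeval (y k) f = x := by
  induction hx using Algebra.adjoin_induction with
  | mem x hx =>
    obtain ⟨i, rfl⟩ := hx
    by_cases hi : (i : ℕ) < k
    · exact ⟨C ⟨y i, mem_truncAdjoin hi⟩, aeval_C _ _⟩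
    · refine ⟨X, ?_⟩
      simp [show (i : ℕ) = k by omega]
  | algebraMap r => exact ⟨C (algebraMap R _ r), aeval_C _ _⟩
  | add x x' _ _ h h' =>
    obtain ⟨f, hf⟩ := h
    obtain ⟨f', hf'⟩ := h'
    exact ⟨f + f', by rw [map_add, hf, hf']⟩
  | mul x x' _ _ h h' =>
    obtain ⟨f, hf⟩ := h
    obtain ⟨f', hf'⟩ := h'
    exact ⟨f * f', by rw [map_mul, hf, hf']⟩

section Shift

variable {σ : R →+* R} {τ : S →+* S}

theorem pow_algebraMap (hτ : ∀ r, τ (algebraMap R S r) = algebraMap R S (σ r)) (j : ℕ) (r : R) :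
    (τ ^ j) (algebraMap R S r) = algebraMap R S ((σ ^ j) r) := by
  induction j generalizing r with
  | zero => rfl
  | succ j ih => rw [pow_succ, pow_succ, RingHom.mul_def, RingHom.comp_apply, hτ, ih]; rfl

theorem pow_gen (hy : ∀ k, τ (y k) = y (k + 1)) (j k : ℕ) : (τ ^ j) (y k) = y (k + j) := by
  induction j generalizing k with
  | zero => rfl
  | succ j ih => rw [pow_succ, RingHom.mul_def, RingHom.comp_apply, hy, ih]; congr 1; omega

theorem pow_mem_truncAdjoin (hτ : ∀ r, τ (algebraMap R S r) = algebraMap R S (σ r))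
    (hy : ∀ k, τ (y k) = y (k + 1)) {m j k : ℕ} (h : m + j ≤ k) {x : S}
    (hx : x ∈ truncAdjoin R y m) : (τ ^ j) x ∈ truncAdjoin R y k := by
  induction hx using Algebra.adjoin_induction with
  | mem x hx =>
    obtain ⟨i, rfl⟩ := hx
    rw [pow_gen hy]
    exact mem_truncAdjoin (by omega)
  | algebraMap r => rw [pow_algebraMap hτ]; exact Subalgebra.algebraMap_mem _ _
  | add x x' _ _ hx hx' => rw [map_add]; exact add_mem hx hx'
  | mul x x' _ _ hx hx' => rw [map_mul]; exact mul_mem hx hx'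

/-- The `j`-th power of `τ` as a map between truncations. -/
def truncShift (hτ : ∀ r, τ (algebraMap R S r) = algebraMap R S (σ r))
    (hy : ∀ k, τ (y k) = y (k + 1)) {m j k : ℕ} (h : m + j ≤ k) :
    truncAdjoin R y m →+* truncAdjoin R y k :=
  ((τ ^ j).comp (truncAdjoin R y m).val.toRingHom).codRestrict (truncAdjoin R y k)
    fun x ↦ pow_mem_truncAdjoin hτ hy h x.2

variable (hτ : ∀ r, τ (algebraMap R S r) = algebraMap R S (σ r))
  (hy : ∀ k, τ (y k) = y (k + 1))
include hτ hy

theorem IsPartialPoint.shift {m j k : ℕ} (h : m + j ≤ k) {ρ : R →+* L} {α : ℕ → L}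
    {φ : truncAdjoin R y k →+* L} (hφ : IsPartialPoint k ρ α φ) :
    IsPartialPoint m (ρ.comp (σ ^ j)) (fun i ↦ α (i + j)) (φ.comp (truncShift hτ hy h)) where
  map_algebraMap r := by
    rw [RingHom.comp_apply, RingHom.comp_apply, ← hφ.map_algebraMap]
    exact congrArg φ (Subtype.ext (pow_algebraMap hτ j r))
  map_gen i hi := by
    rw [RingHom.comp_apply, ← hφ.map_gen (i + j) (by omega)]
    exact congrArg φ (Subtype.ext (pow_gen hy j i))

theorem truncShift_injective (hinj : Function.Injective τ) {m j k : ℕ} (h : m + j ≤ k) :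
    Function.Injective (truncShift hτ hy h) := fun a b hab ↦ by
  have hj : Function.Injective (τ ^ j) := by rw [RingHom.coe_pow]; exact hinj.iterate j
  exact Subtype.ext (hj (congrArg Subtype.val hab))

theorem aeval_map_truncShift {m j k : ℕ} (h : m + j ≤ k) (i : ℕ) (G : (truncAdjoin R y m)[X]) :
    aeval (y (i + j)) (G.map (truncShift hτ hy h)) = (τ ^ j) (aeval (y i) G) := by
  rw [aeval_def, eval₂_map, aeval_def, hom_eval₂, pow_gen hy]
  rfl

/-- A homomorphism on a truncation extends to the next one along a shifted generic relation. -/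
theorem exists_extend_truncAdjoin [IsDomain S] (hinj : Function.Injective τ) {m j : ℕ}
    {G : (truncAdjoin R y m)[X]} (hG : aeval (y m) G = 0)
    (hmin : ∀ f : (truncAdjoin R y (m + j))[X], f ≠ 0 → aeval (y (m + j)) f = 0 →
      G.natDegree ≤ f.natDegree)
    {ρ : R →+* L} {α : ℕ → L} {φ : truncAdjoin R y (m + j) →+* L}
    (hφ : IsPartialPoint (m + j) ρ α φ)
    (hlc : φ (truncShift hτ hy le_rfl G.leadingCoeff) ≠ 0)
    (hα : G.eval₂ (φ.comp (truncShift hτ hy le_rfl)) (α (m + j)) = 0) :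
    ∃ φ' : truncAdjoin R y (m + j + 1) →+* L, IsPartialPoint (m + j + 1) ρ α φ' := by
  let ι : truncAdjoin R y (m + j) →+* truncAdjoin R y (m + j + 1) :=
    (Subalgebra.inclusion (truncAdjoin_mono (m + j).le_succ)).toRingHom
  let Y : truncAdjoin R y (m + j + 1) := ⟨y (m + j), mem_truncAdjoin (Nat.lt_succ_self _)⟩
  have hY (f : (truncAdjoin R y (m + j))[X]) :
      ((f.eval₂ ι Y : truncAdjoin R y (m + j + 1)) : S) = aeval (y (m + j)) f :=
    hom_eval₂ f ι (truncAdjoin R y (m + j + 1)).val.toRingHom Y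
  obtain ⟨φ', h1, h2⟩ := exists_ringHom_extension (ι := ι) (Subalgebra.inclusion_injective _)
    (y := Y) (fun b ↦ (exists_aeval_eq_of_mem_truncAdjoin_succ b.2).imp
      fun f hf ↦ Subtype.ext ((hY f).trans hf))
    (G := G.map (truncShift hτ hy le_rfl)) (ψ := φ) (α := α (m + j))
    (Subtype.ext <| (hY _).trans <| by rw [aeval_map_truncShift, hG, map_zero]; rfl)
    (fun f hf h ↦ natDegree_map_le.trans (hmin f hf (by rw [← hY]; exact congrArg _ h)))
    (by rwa [leadingCoeff_map_of_injective (truncShift_injective hτ hy hinj le_rfl)])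
    (by rwa [eval₂_map])
  refine ⟨φ', fun r ↦ ?_, fun i hi ↦ ?_⟩
  · rw [← hφ.map_algebraMap, ← h1]; rfl
  · rcases Nat.lt_succ_iff_lt_or_eq.mp hi with hi | rfl
    · rw [← hφ.map_gen i hi, ← h1]; rfl
    · exact h2

end Shift

end Orbit

theorem exists_forall_of_extend {L : Type*} {n : ℕ} {P : ℕ → (ℕ → L) → Prop}
    (hcongr : ∀ k α α', (∀ i < n + k, α i = α' i) → P k α → P k α')
    (hzero : ∃ α, P 0 α)
    (hsucc : ∀ k α, P k α → ∃ α', P (k + 1) α' ∧ ∀ i < n + k, α' i = α i) :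
    ∃ α, ∀ k, P k α := by
  obtain ⟨α₀, h₀⟩ := hzero
  choose! g hg hgα using hsucc
  let a : ℕ → ℕ → L := fun k ↦ Nat.rec α₀ (fun k α ↦ g k α) k
  have ha (k) : P k (a k) := by
    induction k with
    | zero => exact h₀
    | succ k ih => exact hg k _ ih
  have hstep (k i) (hi : i < n + k) : a (k + 1) i = a k i := hgα k _ (ha k) i hi
  have hstable (k l i) (hi : i < n + k) : a (k + l) i = a k i := by
    induction l with
    | zero => rfl
    | succ l ih => rw [← ih]; exact hstep (k + l) i (by omega)
  refine ⟨fun i ↦ a (i + 1) i, fun k ↦ hcongr k (a k) _ (fun i hi ↦ ?_) (ha k)⟩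
  rw [← hstable k (i + 1) i hi, ← hstable (i + 1) k i (by omega), add_comm]

section Generic

universe u

variable {R S : Type u} [CommRing R] [CommRing S] [Algebra R S] {y : ℕ → S}

theorem IsPartialPoint.congr {L : Type*} [Field L] {k : ℕ} {ρ : R →+* L} {α α' : ℕ → L}
    {φ : truncAdjoin R y k →+* L} (h : IsPartialPoint k ρ α φ) (hα : ∀ i < k, α i = α' i) :
    IsPartialPoint k ρ α' φ :=
  ⟨h.map_algebraMap, fun i hi ↦ (h.map_gen i hi).trans (hα i hi)⟩

/-- The nonvanishing of `c` at a point of the base forces the nonvanishing of `b` at every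
partial point above it whose first `n` coordinates are algebraically independent. -/
def ControlsVanishing (n k : ℕ) (b : truncAdjoin R y k) (c : R) : Prop :=
  ∀ (F L : Type u) [Field F] [Field L] [Algebra F L] (ρ : R →+* F) (α : ℕ → L)
    (φ : truncAdjoin R y k →+* L), IsPartialPoint k ((algebraMap F L).comp ρ) α φ →
    AlgebraicIndependent F (fun i : Fin n ↦ α i) → ρ c ≠ 0 → φ b ≠ 0

theorem ControlsVanishing.of_dvd {n k : ℕ} {b : truncAdjoin R y k} {c c' : R}
    (h : ControlsVanishing n k b c) (hc : c ∣ c') : ControlsVanishing n k b c' := by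
  intro F L _ _ _ ρ α φ hφ hα hc'
  exact h F L ρ α φ hφ hα fun h0 ↦ hc' <| by
    obtain ⟨e, rfl⟩ := hc
    rw [map_mul, h0, zero_mul]

theorem IsPartialPoint.apply_aeval {L : Type*} [Field L] {k n : ℕ} (hnk : n ≤ k) {ρ : R →+* L}
    {α : ℕ → L} {φ : truncAdjoin R y k →+* L} (h : IsPartialPoint k ρ α φ)
    (P : MvPolynomial (Fin n) R)
    (hP : MvPolynomial.aeval (fun i : Fin n ↦ y i) P ∈ truncAdjoin R y k) :
    φ ⟨_, hP⟩ = MvPolynomial.eval₂ ρ (fun i : Fin n ↦ α i) P := by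
  let x : Fin n → truncAdjoin R y k := fun i ↦ ⟨y i, mem_truncAdjoin (i.2.trans_le hnk)⟩
  have hx : (⟨_, hP⟩ : truncAdjoin R y k) = MvPolynomial.aeval x P :=
    Subtype.ext (MvPolynomial.comp_aeval_apply x (truncAdjoin R y k).val P).symm
  rw [hx, MvPolynomial.aeval_def, MvPolynomial.hom_eval₂]
  congr 1
  · exact RingHom.ext h.map_algebraMap
  · exact funext fun i ↦ h.map_gen i (i.2.trans_le hnk)

theorem exists_aeval_eq_of_mem_truncAdjoin {n : ℕ} {x : S} (hx : x ∈ truncAdjoin R y n) :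
    ∃ P : MvPolynomial (Fin n) R, MvPolynomial.aeval (fun i : Fin n ↦ y i) P = x := by
  rw [truncAdjoin, Algebra.adjoin_range_eq_range_aeval] at hx
  exact hx

theorem eval₂_ne_zero_of_coeff {ι F L : Type*} [Field F] [Field L] [Algebra F L] {α : ι → L}
    (hα : AlgebraicIndependent F α) (ρ : R →+* F) {P : MvPolynomial ι R} {d : ι →₀ ℕ}
    (hP : ρ (P.coeff d) ≠ 0) : MvPolynomial.eval₂ ((algebraMap F L).comp ρ) α P ≠ 0 := by
  intro h0
  have h1 : MvPolynomial.aeval α (MvPolynomial.map ρ P) = 0 := by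
    rw [← h0, MvPolynomial.aeval_def, MvPolynomial.eval₂_map]
  have h2 := hα.eq_zero_of_aeval_eq_zero _ h1
  rw [← MvPolynomial.coeff_map, h2, MvPolynomial.coeff_zero] at hP
  exact hP rfl

theorem exists_controlsVanishing [IsDomain S] {n k : ℕ} (hnk : n ≤ k) {b : truncAdjoin R y k}
    (hb : b ≠ 0) (halg : IsAlgebraic (truncAdjoin R y n) (b : S)) :
    ∃ c : R, c ≠ 0 ∧ ControlsVanishing n k b c := by
  obtain ⟨f, hf0, hf⟩ := halg.exists_nonzero_coeff_and_aeval_eq_zero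
    (mem_nonZeroDivisors_of_ne_zero (by simpa using hb))
  obtain ⟨P, hP⟩ := exists_aeval_eq_of_mem_truncAdjoin (f.coeff 0).2
  have hP0 : P ≠ 0 := by
    rintro rfl
    exact hf0 (Subtype.ext (by rw [← hP, map_zero]; rfl))
  obtain ⟨d, hd⟩ := MvPolynomial.ne_zero_iff.mp hP0
  refine ⟨P.coeff d, hd, fun F L _ _ _ ρ α φ hφ hα hc hb0 ↦ ?_⟩
  let ι : truncAdjoin R y n →+* truncAdjoin R y k :=
    (Subalgebra.inclusion (truncAdjoin_mono hnk)).toRingHom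
  have hfb : f.eval₂ ι b = 0 :=
    Subtype.ext <| (hom_eval₂ f ι (truncAdjoin R y k).val.toRingHom b).trans hf
  have h1 := congrArg φ hfb
  rw [hom_eval₂, hb0, map_zero, eval₂_at_zero] at h1
  refine eval₂_ne_zero_of_coeff hα ρ hc ?_
  rw [← hφ.apply_aeval hnk P (hP ▸ truncAdjoin_mono hnk (f.coeff 0).2), ← h1]
  exact congrArg φ (Subtype.ext hP)

theorem adjoin_range_succ_le (n : ℕ) :
    Algebra.adjoin R (Set.range fun i : Fin n ↦ y (i + 1)) ≤ truncAdjoin R y (n + 1) := by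
  refine Algebra.adjoin_le ?_
  rintro _ ⟨i, rfl⟩
  exact mem_truncAdjoin (by omega)

theorem IsPartialPoint.apply_mem_adjoin {F L : Type*} [Field F] [Field L] [Algebra F L] {n : ℕ}
    {ρ : R →+* F} {α : ℕ → L} {φ : truncAdjoin R y (n + 1) →+* L}
    (hφ : IsPartialPoint (n + 1) ((algebraMap F L).comp ρ) α φ)
    (x : Algebra.adjoin R (Set.range fun i : Fin n ↦ y (i + 1))) :
    φ (Subalgebra.inclusion (adjoin_range_succ_le n) x) ∈
      Algebra.adjoin F (Set.range fun i : Fin n ↦ α (i + 1)) := by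
  obtain ⟨x, hx⟩ := x
  induction hx using Algebra.adjoin_induction with
  | mem x hx =>
    obtain ⟨i, rfl⟩ := hx
    exact Algebra.subset_adjoin ⟨i, (hφ.map_gen (i + 1) (by omega)).symm⟩
  | algebraMap r =>
    have : φ (algebraMap R _ r) = algebraMap F L (ρ r) := hφ.map_algebraMap r
    exact this ▸ Subalgebra.algebraMap_mem _ _
  | add x x' hx hx' h h' =>
    have e : (⟨x + x', add_mem hx hx'⟩ :
        Algebra.adjoin R (Set.range fun i : Fin n ↦ y (i + 1))) = ⟨x, hx⟩ + ⟨x', hx'⟩ := rfl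
    rw [e, map_add, map_add]
    exact add_mem h h'
  | mul x x' hx hx' h h' =>
    have e : (⟨x * x', mul_mem hx hx'⟩ :
        Algebra.adjoin R (Set.range fun i : Fin n ↦ y (i + 1))) = ⟨x, hx⟩ * ⟨x', hx'⟩ := rfl
    rw [e, map_mul, map_mul]
    exact mul_mem h h'

theorem isAlgebraic_of_eval₂_eq_zero {A F L : Type*} [CommRing A] [Field F] [Field L]
    [Algebra F L] {ψ : A →+* L} {E : Subalgebra F L} (hE : ∀ a, ψ a ∈ E) {W : A[X]}
    (h0 : ψ W.leadingCoeff ≠ 0) {x : L} (hx : W.eval₂ ψ x = 0) : IsAlgebraic E x := by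
  refine ⟨W.map (ψ.codRestrict E hE), fun h ↦ h0 ?_, ?_⟩
  · have h1 : ψ.codRestrict E hE W.leadingCoeff = 0 := by
      rw [leadingCoeff, ← coeff_map, h, coeff_zero]
    exact congrArg Subtype.val h1
  · rw [aeval_def, eval₂_map]
    exact hx

theorem IsPartialPoint.isAlgebraic {F L : Type*} [Field F] [Field L] [Algebra F L] {n : ℕ}
    {W : (Algebra.adjoin R (Set.range fun i : Fin n ↦ y (i + 1)))[X]} (hW : aeval (y 0) W = 0)
    {ρ : R →+* F} {α : ℕ → L} {φ : truncAdjoin R y (n + 1) →+* L}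
    (hφ : IsPartialPoint (n + 1) ((algebraMap F L).comp ρ) α φ)
    (h0 : φ (Subalgebra.inclusion (adjoin_range_succ_le n) W.leadingCoeff) ≠ 0) :
    IsAlgebraic (Algebra.adjoin F (Set.range fun i : Fin n ↦ α (i + 1))) (α 0) := by
  let ι := (Subalgebra.inclusion (adjoin_range_succ_le (R := R) (y := y) n)).toRingHom
  let Y : truncAdjoin R y (n + 1) := ⟨y 0, mem_truncAdjoin n.succ_pos⟩
  have hY : ((W.eval₂ ι Y : truncAdjoin R y (n + 1)) : S) = aeval (y 0) W :=
    hom_eval₂ W ι (truncAdjoin R y (n + 1)).val.toRingHom Y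
  have h1 : W.eval₂ ι Y = 0 := Subtype.ext (hY.trans hW)
  have h2 := congrArg φ h1
  rw [hom_eval₂, hφ.map_gen 0 n.succ_pos, map_zero] at h2
  exact isAlgebraic_of_eval₂_eq_zero hφ.apply_mem_adjoin h0 h2

end Generic

section Points

universe u

variable {R S : Type u} [CommRing R] [CommRing S] [Algebra R S] {y : ℕ → S}

theorem natDegree_pos_of_aeval_eq_zero {m : ℕ} {G : (truncAdjoin R y m)[X]} (hG0 : G ≠ 0)
    {x : S} (hG : aeval x G = 0) : 0 < G.natDegree := by
  by_contra hlt
  have hC := eq_C_of_natDegree_eq_zero (by omega : G.natDegree = 0)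
  rw [hC, aeval_C] at hG
  have h0 : G.coeff 0 = 0 := Subtype.ext hG
  exact hG0 (by rw [hC, h0, C_0])

theorem exists_isPartialPoint_of_algebraicIndependent {L : Type*} [Field L] {n : ℕ}
    (hind : AlgebraicIndependent R fun i : Fin n ↦ y i) (ρ : R →+* L) (α : ℕ → L) :
    ∃ φ : truncAdjoin R y n →+* L, IsPartialPoint n ρ α φ := by
  obtain ⟨e, he⟩ : ∃ e : MvPolynomial (Fin n) R ≃ₐ[R] truncAdjoin R y n,
      ∀ P, (e P : S) = MvPolynomial.aeval (fun i : Fin n ↦ y i) P :=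
    ⟨hind.aevalEquiv, hind.algebraMap_aevalEquiv⟩
  refine ⟨(MvPolynomial.eval₂Hom ρ fun i : Fin n ↦ α i).comp e.symm.toRingEquiv.toRingHom,
    fun r ↦ ?_, fun i hi ↦ ?_⟩
  · have : e.symm (algebraMap R _ r) = MvPolynomial.C r := e.symm.commutes r
    exact (congrArg _ this).trans (MvPolynomial.eval₂_C _ _ _)
  · have : e.symm ⟨y i, mem_truncAdjoin hi⟩ = MvPolynomial.X ⟨i, hi⟩ := by
      rw [AlgEquiv.symm_apply_eq]
      exact Subtype.ext (by rw [he, MvPolynomial.aeval_X])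
    exact (congrArg _ this).trans (MvPolynomial.eval₂_X _ _ _)

variable [IsDomain S] {σ : R →+* R} {τ : S →+* S}
  (hτ : ∀ r, τ (algebraMap R S r) = algebraMap R S (σ r))
  (hy : ∀ k, τ (y k) = y (k + 1)) (hinj : Function.Injective τ)
include hτ hy hinj

theorem exists_extend_update {F L : Type u} [Field F] [Field L] [Algebra F L] [IsAlgClosed L]
    {n m j K : ℕ} (hK : K = m + j) {r : R} {G : (truncAdjoin R y m)[X]} (hG0 : G ≠ 0)
    (hG : aeval (y m) G = 0)
    (hmin : ∀ f : (truncAdjoin R y (m + j))[X], f ≠ 0 → aeval (y (m + j)) f = 0 →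
      G.natDegree ≤ f.natDegree) (hctrl : ControlsVanishing n m G.leadingCoeff r)
    {ρ : R →+* F} (hρ : ∀ k, ρ ((σ ^ k) r) ≠ 0) {α : ℕ → L}
    (hφ : ∃ φ : truncAdjoin R y K →+* L, IsPartialPoint K ((algebraMap F L).comp ρ) α φ)
    (hα : AlgebraicIndependent F fun i : Fin n ↦ α (i + j)) :
    ∃ β, ∃ φ : truncAdjoin R y (K + 1) →+* L,
      IsPartialPoint (K + 1) ((algebraMap F L).comp ρ) (Function.update α K β) φ := by
  subst hK
  obtain ⟨φ, hφ⟩ := hφ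
  have hlc : φ (truncShift hτ hy le_rfl G.leadingCoeff) ≠ 0 :=
    hctrl F L (ρ.comp (σ ^ j)) _ _ (hφ.shift hτ hy le_rfl) hα (hρ j)
  obtain ⟨β, hβ⟩ := IsAlgClosed.exists_root (G.map (φ.comp (truncShift hτ hy le_rfl))) <| by
    refine ne_of_gt (natDegree_pos_iff_degree_pos.mp ?_)
    rw [natDegree_map_of_leadingCoeff_ne_zero _ hlc]
    exact natDegree_pos_of_aeval_eq_zero hG0 hG
  rw [IsRoot.def, eval_map] at hβ
  have hφ' : IsPartialPoint (m + j) ((algebraMap F L).comp ρ)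
      (Function.update α (m + j) β) φ :=
    hφ.congr fun i hi ↦ (Function.update_of_ne hi.ne _ _).symm
  exact ⟨β, exists_extend_truncAdjoin hτ hy hinj hG hmin hφ' hlc (by simpa using hβ)⟩

theorem exists_ringHom_forall_algebraicIndependent {F L : Type u} [Field F] [Field L]
    [Algebra F L] [IsAlgClosed L] {n : ℕ} {r : R}
    (hgen : Algebra.adjoin R (Set.range y) = ⊤)
    (hind : AlgebraicIndependent R fun i : Fin n ↦ y i)
    (hrel : ∀ k, n ≤ k → ∃ m j, k = m + j ∧ j + n ≤ k ∧ ∃ G : (truncAdjoin R y m)[X], G ≠ 0 ∧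
      aeval (y m) G = 0 ∧ (∀ f : (truncAdjoin R y (m + j))[X], f ≠ 0 →
        aeval (y (m + j)) f = 0 → G.natDegree ≤ f.natDegree) ∧
      ControlsVanishing n m G.leadingCoeff r)
    {W : (Algebra.adjoin R (Set.range fun i : Fin n ↦ y (i + 1)))[X]} (hW : aeval (y 0) W = 0)
    (hWr : ControlsVanishing n (n + 1)
      (Subalgebra.inclusion (adjoin_range_succ_le n) W.leadingCoeff) r)
    {ρ : R →+* F} (hρ : ∀ k, ρ ((σ ^ k) r) ≠ 0) {α₀ : ℕ → L}
    (hα₀ : AlgebraicIndependent F fun i : Fin n ↦ α₀ i) :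
    ∃ φ : S →+* L, φ.comp (algebraMap R S) = (algebraMap F L).comp ρ ∧
      ∀ j, AlgebraicIndependent F fun i : Fin n ↦ φ (y (i + j)) := by
  let P (k : ℕ) (α : ℕ → L) : Prop :=
    (∃ φ : truncAdjoin R y (n + k) →+* L,
      IsPartialPoint (n + k) ((algebraMap F L).comp ρ) α φ) ∧
    ∀ j ≤ k, AlgebraicIndependent F fun i : Fin n ↦ α (i + j)
  obtain ⟨α, hα⟩ : ∃ α, ∀ k, P k α := by
    refine exists_forall_of_extend (n := n) (fun k α α' h hP ↦ ⟨?_, fun j hj ↦ ?_⟩) ?_ ?_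
    · obtain ⟨φ, hφ⟩ := hP.1
      exact ⟨φ, hφ.congr h⟩
    · have : (fun i : Fin n ↦ α' (i + j)) = fun i : Fin n ↦ α (i + j) :=
        funext fun i ↦ (h _ (by omega)).symm
      exact this ▸ hP.2 j hj
    · refine ⟨α₀, exists_isPartialPoint_of_algebraicIndependent hind _ _, fun j hj ↦ ?_⟩
      obtain rfl : j = 0 := by omega
      exact hα₀
    · intro k α hP
      obtain ⟨m, j, hk, hj, G, hG0, hG, hmin, hctrl⟩ := hrel (n + k) (by omega)
      obtain ⟨β, φ, hφ⟩ := exists_extend_update hτ hy hinj hk hG0 hG hmin hctrl hρ hP.1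
        (hP.2 j (by omega))
      have hlt (i) (hi : i < n + k) : Function.update α (n + k) β i = α i :=
        Function.update_of_ne hi.ne _ _
      have hold (j) (hj : j ≤ k) :
          AlgebraicIndependent F fun i : Fin n ↦ Function.update α (n + k) β (i + j) := by
        have : (fun i : Fin n ↦ Function.update α (n + k) β (i + j)) =
            fun i : Fin n ↦ α (i + j) := funext fun i ↦ hlt _ (by omega)
        exact this ▸ hP.2 j hj
      refine ⟨_, ⟨⟨φ, hφ⟩, fun j hj ↦ ?_⟩, hlt⟩
      rcases Nat.le_succ_iff.mp hj with hj | rfl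
      · exact hold j hj
      · have hshift := hφ.shift hτ hy (show n + 1 + k ≤ n + k + 1 by omega)
        have halg := hshift.isAlgebraic (ρ := ρ.comp (σ ^ k)) hW
          (hWr F L (ρ.comp (σ ^ k)) _ _ hshift (hold k le_rfl) (hρ k))
        have := AlgebraicIndependent.algebraicIndependent_succ
          (x := fun i ↦ Function.update α (n + k) β (i + k)) (hold k le_rfl) halg
        simpa only [add_right_comm _ 1 k, Nat.succ_eq_add_one, ← add_assoc] using this
  obtain ⟨φ, hφ, hφα⟩ := exists_ringHom_of_isPartialPoint hgen
    (ρ := (algebraMap F L).comp ρ) (α := α) fun k ↦ by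
      obtain ⟨φ, hφ⟩ := (hα k).1
      exact ⟨φ.comp (Subalgebra.inclusion (truncAdjoin_mono (Nat.le_add_left k n))).toRingHom,
        hφ.map_algebraMap, fun i hi ↦ hφ.map_gen i (by omega)⟩
  exact ⟨φ, hφ, fun j ↦ by simpa only [hφα] using (hα j).2 j le_rfl⟩

end Points

section Periodic

universe u

theorem isAlgebraic_of_eval₂_mem_algebraicClosure {A K E : Type*} [CommRing A] [CommRing K]
    [IsDomain K] [CommRing E] [IsDomain E] [Algebra K E] {ψ : A →+* E}
    (hψ : ∀ a, IsAlgebraic K (ψ a)) {W : A[X]}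
    (h0 : ψ W.leadingCoeff ≠ 0) {x : E} (hx : W.eval₂ ψ x = 0) : IsAlgebraic K x := by
  have : IsAlgebraic (Subalgebra.algebraicClosure K E) x := by
    refine ⟨W.map (ψ.codRestrict (Subalgebra.algebraicClosure K E) hψ), fun h ↦ h0 ?_, ?_⟩
    · have h1 : ψ.codRestrict (Subalgebra.algebraicClosure K E) hψ W.leadingCoeff = 0 := by
        rw [leadingCoeff, ← coeff_map, h, coeff_zero]
      exact congrArg Subtype.val h1
    · rw [aeval_def, eval₂_map]
      exact hx
  have halg : Algebra.IsAlgebraic K (Subalgebra.algebraicClosure K E) := inferInstance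
  exact this.restrictScalars K

theorem exists_ringHom_of_isAlgebraic_quotient {A S : Type u} [CommRing A] [CommRing S]
    [Algebra A S] (P : Ideal A) [P.IsPrime] (Q : Ideal S) [Q.IsPrime] [Q.LiesOver P]
    [Algebra.IsAlgebraic (A ⧸ P) (S ⧸ Q)] (g : A →+* S) (hg : ∀ a, g a ∈ Q ↔ a ∈ P) :
    ∃ (M : Type u) (_ : Field M) (_ : IsAlgClosed M) (φ : S →+* M) (τ' : M →+* M),
      RingHom.ker φ = Q ∧ ∀ a, τ' (φ (algebraMap A S a)) = φ (g a) := by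
  let M := AlgebraicClosure (FractionRing (A ⧸ P))
  have hinj : Function.Injective (algebraMap (A ⧸ P) M) := by
    rw [IsScalarTower.algebraMap_eq (A ⧸ P) (FractionRing (A ⧸ P)) M]
    exact (algebraMap (FractionRing (A ⧸ P)) M).injective.comp (IsFractionRing.injective _ _)
  have : FaithfulSMul (A ⧸ P) M := (faithfulSMul_iff_algebraMap_injective _ _).mpr hinj
  obtain ⟨φ, hφ, hφA⟩ := exists_injective_ringHom_comp_eq (E := S ⧸ Q) _ hinj
  let φ' : S →+* M := φ.comp (Ideal.Quotient.mk Q)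
  have hker (x) : φ' x = 0 ↔ x ∈ Q :=
    (map_eq_zero_iff φ hφ).trans Ideal.Quotient.eq_zero_iff_mem
  have hφ'A (x : A) : φ' (algebraMap A S x) = algebraMap (A ⧸ P) M (Ideal.Quotient.mk P x) :=
    congrArg (· (Ideal.Quotient.mk P x)) hφA
  let f : A ⧸ P →+* M := Ideal.Quotient.lift P (φ'.comp g)
    fun x hx ↦ (hker _).mpr ((hg x).mpr hx)
  have hf : Function.Injective f := by
    refine (injective_iff_map_eq_zero f).mpr fun x hx ↦ ?_
    obtain ⟨x, rfl⟩ := Ideal.Quotient.mk_surjective x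
    exact Ideal.Quotient.eq_zero_iff_mem.mpr ((hg x).mp ((hker _).mp hx))
  have : Algebra.IsAlgebraic (A ⧸ P) (FractionRing (A ⧸ P)) :=
    IsLocalization.isAlgebraic _ (nonZeroDivisors (A ⧸ P))
  have : Algebra.IsAlgebraic (A ⧸ P) M := Algebra.IsAlgebraic.trans _ (FractionRing (A ⧸ P)) _
  obtain ⟨τ', -, hτ'⟩ := exists_injective_ringHom_comp_eq (E := M) f hf
  refine ⟨M, inferInstance, inferInstance, φ', τ', Ideal.ext hker, fun x ↦ ?_⟩
  rw [hφ'A x]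
  exact congrArg (· (Ideal.Quotient.mk P x)) hτ'

variable {R S : Type u} [CommRing R] [CommRing S] [Algebra R S] {y : ℕ → S}

theorem isAlgebraic_of_mem_truncAdjoin {K E : Type*} [CommRing K] [IsDomain K] [CommRing E]
    [IsDomain E] [Algebra K E] {θ : S →+* E} {n : ℕ}
    (hbase : ∀ x ∈ truncAdjoin R y n, IsAlgebraic K (θ x))
    (hstep : ∀ k, n ≤ k → ∃ f : (truncAdjoin R y k)[X], aeval (y k) f = 0 ∧
      θ f.leadingCoeff ≠ 0) {k : ℕ} {x : S} (hx : x ∈ truncAdjoin R y k) :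
    IsAlgebraic K (θ x) := by
  have key (k) : ∀ x ∈ truncAdjoin R y (n + k), IsAlgebraic K (θ x) := by
    induction k with
    | zero => exact hbase
    | succ k ih =>
      intro x hx
      obtain ⟨g, rfl⟩ := exists_aeval_eq_of_mem_truncAdjoin_succ (k := n + k) hx
      obtain ⟨f, hf, hlc⟩ := hstep (n + k) (by omega)
      have hy : IsAlgebraic K (θ (y (n + k))) :=
        isAlgebraic_of_eval₂_mem_algebraicClosure
          (ψ := θ.comp (truncAdjoin R y (n + k)).val.toRingHom) (fun a ↦ ih a a.2) hlc
          ((hom_eval₂ f _ θ _).symm.trans <| (congrArg θ hf).trans (map_zero θ))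
      rw [aeval_eq_sum_range, map_sum]
      refine Subalgebra.sum_mem (Subalgebra.algebraicClosure K E) fun i _ ↦ ?_
      rw [Algebra.smul_def, map_mul, map_pow]
      exact (ih _ (g.coeff i).2).mul (hy.pow i)
  exact key k x (truncAdjoin_mono (Nat.le_add_left k n) hx)

variable {σ : R →+* R} {τ : S →+* S} (hτ : ∀ r, τ (algebraMap R S r) = algebraMap R S (σ r))
  (hy : ∀ k, τ (y k) = y (k + 1))
include hτ hy

/-- A prime ideal that is periodic on a truncation gives rise to a periodic homomorphism
to an algebraically closed field. -/
theorem exists_ringHom_of_periodic_truncAdjoin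
    (hgen : Algebra.adjoin R (Set.range y) = ⊤) {m D : ℕ} {G : (truncAdjoin R y m)[X]}
    (hG : aeval (y m) G = 0) {Q : Ideal S} (hQ : Q.IsPrime)
    (hlc : ∀ k, (τ ^ k) G.leadingCoeff ∉ Q)
    (hD : ∀ x ∈ truncAdjoin R y m, (τ ^ D) x ∈ Q ↔ x ∈ Q) :
    ∃ (M : Type u) (_ : Field M) (_ : IsAlgClosed M) (φ : S →+* M) (τ' : M →+* M),
      RingHom.ker φ = Q ∧ ∀ x ∈ truncAdjoin R y m, τ' (φ x) = φ ((τ ^ D) x) := by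
  let P : Ideal (truncAdjoin R y m) := Q.comap (algebraMap _ S)
  have hP : P.IsPrime := hQ.comap _
  have : Q.LiesOver P := ⟨rfl⟩
  have : IsDomain (truncAdjoin R y m ⧸ P) := Ideal.Quotient.isDomain P
  have : Nontrivial (truncAdjoin R y m ⧸ P) := IsDomain.toNontrivial
  have halg : Algebra.IsAlgebraic (truncAdjoin R y m ⧸ P) (S ⧸ Q) := by
    refine ⟨fun x ↦ ?_⟩
    obtain ⟨x, rfl⟩ := Ideal.Quotient.mk_surjective x
    obtain ⟨k, hk⟩ := exists_mem_truncAdjoin hgen x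
    refine isAlgebraic_of_mem_truncAdjoin (n := m) (fun x hx ↦ ?_) (fun k hk ↦ ?_) hk
    · have hx' : algebraMap (truncAdjoin R y m ⧸ P) (S ⧸ Q) (Ideal.Quotient.mk P ⟨x, hx⟩) =
          Ideal.Quotient.mk Q x := rfl
      rw [← hx']
      exact isAlgebraic_algebraMap _
    · obtain ⟨j, rfl⟩ := Nat.exists_eq_add_of_le hk
      have hlc' : Ideal.Quotient.mk Q ((τ ^ j) G.leadingCoeff) ≠ 0 :=
        fun h ↦ hlc j (Ideal.Quotient.eq_zero_iff_mem.mp h)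
      have hlc0 : truncShift hτ hy le_rfl G.leadingCoeff ≠ 0 := fun h ↦ hlc' <| by
        rw [show (τ ^ j) G.leadingCoeff = 0 from congrArg Subtype.val h, map_zero]
      refine ⟨G.map (truncShift hτ hy le_rfl), ?_, ?_⟩
      · rw [aeval_map_truncShift, hG, map_zero]
      · rw [leadingCoeff_map_of_leadingCoeff_ne_zero _ hlc0]
        exact hlc'
  obtain ⟨M, i1, i2, φ, τ', hker, h⟩ := exists_ringHom_of_isAlgebraic_quotient P Q
    ((τ ^ D).comp (truncAdjoin R y m).val.toRingHom) fun x ↦ hD x x.2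
  exact ⟨M, i1, i2, φ, τ', hker, fun x hx ↦ h ⟨x, hx⟩⟩

end Periodic

section Lift

universe u

variable {R S : Type u} [CommRing R] [CommRing S] [Algebra R S] {y : ℕ → S}
  {σ : R →+* R} {τ : S →+* S} (hτ : ∀ r, τ (algebraMap R S r) = algebraMap R S (σ r))
  (hy : ∀ k, τ (y k) = y (k + 1))
include hτ hy

theorem IsPartialPoint.of_ringHom_comp_pow {L : Type*} [Field L] (φ : S →+* L) (m j : ℕ) :
    IsPartialPoint m ((φ.comp (algebraMap R S)).comp (σ ^ j)) (fun i ↦ φ (y (i + j)))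
      ((φ.comp (τ ^ j)).comp (truncAdjoin R y m).val.toRingHom) where
  map_algebraMap r := congrArg φ (pow_algebraMap hτ j r)
  map_gen i _ := congrArg φ (pow_gen hy j i)

variable {M : Type u} [Field M] {φ : S →+* M} {τ' : M →+* M} {m D : ℕ}
  (hφ : ∀ x ∈ truncAdjoin R y m, τ' (φ x) = φ ((τ ^ D) x))
include hφ

omit hy in
theorem pow_apply_algebraMap (c : ℕ) (r : R) :
    (τ' ^ c) (φ (algebraMap R S r)) = φ (algebraMap R S ((σ ^ (D * c)) r)) := by
  induction c with
  | zero => rfl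
  | succ c ih =>
    rw [pow_succ', RingHom.mul_def, RingHom.comp_apply, ih,
      hφ _ (Subalgebra.algebraMap_mem _ _), pow_algebraMap hτ, Nat.mul_succ, add_comm, pow_add]
    rfl

omit hτ in
theorem apply_gen_eq_pow (hD : 0 < D) (e : ℕ) (he : e < D + m) :
    φ (y e) = (τ' ^ (e / D)) (φ (y (e % D))) := by
  induction e using Nat.strong_induction_on with
  | _ e ih =>
    rcases lt_or_ge e D with h | h
    · rw [Nat.div_eq_of_lt h, Nat.mod_eq_of_lt h]
      rfl
    · obtain ⟨e, rfl⟩ := Nat.exists_eq_add_of_le' h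
      rw [← pow_gen hy, ← hφ _ (mem_truncAdjoin (by omega)), ih e (by omega) (by omega),
        Nat.add_div_right _ hD, Nat.add_mod_right, pow_succ', RingHom.mul_def,
        RingHom.comp_apply]

omit hτ in
theorem pow_apply_gen (hD : 0 < D) (i j : ℕ) (hi : i ≤ m) :
    (τ' ^ (j / D)) (φ ((τ ^ (j % D)) (y i))) =
      (τ' ^ ((i + j) / D)) (φ (y ((i + j) % D))) := by
  have hj := Nat.mod_lt j hD
  rw [pow_gen hy, apply_gen_eq_pow hy hφ hD _ (by omega)]
  have e : i + j = i + j % D + D * (j / D) := by have := Nat.mod_add_div j D; omega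
  conv_rhs => rw [e, Nat.add_mul_div_left _ _ hD, Nat.add_mul_mod_self_left, add_comm, pow_add]
  rfl

theorem isPartialPoint_periodic (hD : 0 < D) (j : ℕ) :
    IsPartialPoint m ((φ.comp (algebraMap R S)).comp (σ ^ j))
      (fun i ↦ (τ' ^ ((i + j) / D)) (φ (y ((i + j) % D))))
      (((τ' ^ (j / D)).comp (φ.comp (τ ^ (j % D)))).comp
        (truncAdjoin R y m).val.toRingHom) where
  map_algebraMap r := by
    change (τ' ^ (j / D)) (φ ((τ ^ (j % D)) (algebraMap R S r))) = φ (algebraMap R S ((σ ^ j) r))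
    rw [pow_algebraMap hτ, pow_apply_algebraMap hτ hφ]
    nth_rw 3 [← Nat.div_add_mod j D]
    rw [pow_add]
    rfl
  map_gen i hi := pow_apply_gen hy hφ hD i j hi.le

theorem exists_isPartialPoint_periodic [IsDomain S] (hinj : Function.Injective τ) (hD : 0 < D)
    {G : (truncAdjoin R y m)[X]} (hG : aeval (y m) G = 0)
    (hmin : ∀ j, ∀ f : (truncAdjoin R y (m + j))[X], f ≠ 0 → aeval (y (m + j)) f = 0 →
      G.natDegree ≤ f.natDegree) (hlc : ∀ j, φ ((τ ^ j) G.leadingCoeff) ≠ 0) (k : ℕ) :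
    ∃ ψ : truncAdjoin R y k →+* M, IsPartialPoint k (φ.comp (algebraMap R S))
      (fun i ↦ (τ' ^ (i / D)) (φ (y (i % D)))) ψ := by
  rcases le_total k m with hk | hk
  · exact ⟨φ.comp (truncAdjoin R y k).val.toRingHom, fun _ ↦ rfl,
      fun i hi ↦ apply_gen_eq_pow hy hφ hD i (by omega)⟩
  · obtain ⟨j, rfl⟩ := Nat.exists_eq_add_of_le hk
    clear hk
    induction j with
    | zero => exact ⟨_, isPartialPoint_periodic hτ hy hφ hD 0⟩
    | succ j ih =>
      obtain ⟨ψ, hψ⟩ := ih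
      have hχ := isPartialPoint_periodic hτ hy hφ hD j
      have heq := (hψ.shift hτ hy le_rfl).unique hχ
      refine exists_extend_truncAdjoin hτ hy hinj hG (hmin j) hψ ?_ ?_
      · rw [← RingHom.comp_apply, heq]
        exact (map_ne_zero (τ' ^ (j / D))).mpr (hlc (j % D))
      · rw [heq]
        have h1 := pow_apply_gen hy hφ hD m j le_rfl
        have h2 := hom_eval₂ G (truncAdjoin R y m).val.toRingHom
          ((τ' ^ (j / D)).comp (φ.comp (τ ^ (j % D)))) (y m)
        rw [← h1]
        exact h2.symm.trans ((congrArg _ hG).trans (map_zero _))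

theorem exists_ringHom_periodic [IsDomain S] (hinj : Function.Injective τ)
    (hgen : Algebra.adjoin R (Set.range y) = ⊤) (hD : 0 < D)
    {G : (truncAdjoin R y m)[X]} (hG : aeval (y m) G = 0)
    (hmin : ∀ j, ∀ f : (truncAdjoin R y (m + j))[X], f ≠ 0 → aeval (y (m + j)) f = 0 →
      G.natDegree ≤ f.natDegree) (hlc : ∀ j, φ ((τ ^ j) G.leadingCoeff) ≠ 0) :
    ∃ ψ : S →+* M, ψ.comp (algebraMap R S) = φ.comp (algebraMap R S) ∧
      ψ.comp (τ ^ D) = τ'.comp ψ ∧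
      ∀ x ∈ truncAdjoin R y m, ∀ j, ψ ((τ ^ j) x) = (τ' ^ (j / D)) (φ ((τ ^ (j % D)) x)) := by
  obtain ⟨ψ, hψR, hψy⟩ := exists_ringHom_of_isPartialPoint hgen
    (exists_isPartialPoint_periodic hτ hy hφ hinj hD hG hmin hlc)
  have hR (r : R) : ψ (algebraMap R S r) = φ (algebraMap R S r) := congrArg (· r) hψR
  refine ⟨ψ, hψR, ringHom_ext_of_adjoin_range hgen (fun r ↦ ?_) fun i ↦ ?_, fun x hx j ↦ ?_⟩
  · rw [RingHom.comp_apply, RingHom.comp_apply, hR, pow_algebraMap hτ, hR,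
      hφ _ (Subalgebra.algebraMap_mem _ _), pow_algebraMap hτ]
  · rw [RingHom.comp_apply, RingHom.comp_apply, pow_gen hy, hψy, hψy, Nat.add_div_right _ hD,
      Nat.add_mod_right, pow_succ']
    rfl
  · have h1 := IsPartialPoint.of_ringHom_comp_pow hτ hy ψ m j
    simp only [hψR, hψy] at h1
    exact congrArg (· ⟨x, hx⟩) (h1.unique (isPartialPoint_periodic hτ hy hφ hD j))

end Lift

section Lift

universe u

theorem exists_prime_of_periodic_truncAdjoin {R S : Type u} [CommRing R] [CommRing S] [IsDomain S]
    [Algebra R S] {y : ℕ → S} {σ : R →+* R} {τ : S →+* S}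
    (hτ : ∀ r, τ (algebraMap R S r) = algebraMap R S (σ r))
    (hy : ∀ k, τ (y k) = y (k + 1)) (hinj : Function.Injective τ)
    (hgen : Algebra.adjoin R (Set.range y) = ⊤) {m D : ℕ} (hD : 0 < D)
    {G : (truncAdjoin R y m)[X]} (hG : aeval (y m) G = 0)
    (hmin : ∀ j, ∀ f : (truncAdjoin R y (m + j))[X], f ≠ 0 → aeval (y (m + j)) f = 0 →
      G.natDegree ≤ f.natDegree) {Q : Ideal S} (hQ : Q.IsPrime)
    (hlc : ∀ j, (τ ^ j) G.leadingCoeff ∉ Q)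
    (hQD : ∀ x ∈ truncAdjoin R y m, (τ ^ D) x ∈ Q ↔ x ∈ Q) :
    ∃ q : Ideal S, q.IsPrime ∧ q.comap (τ ^ D) = q ∧
      q.comap (algebraMap R S) = Q.comap (algebraMap R S) ∧
      ∀ s ∈ truncAdjoin R y m, (∀ j, (τ ^ j) s ∉ Q) → ∀ j, (τ ^ j) s ∉ q := by
  obtain ⟨M, _, _, φ, τ', hker, hφ⟩ :=
    exists_ringHom_of_periodic_truncAdjoin hτ hy hgen hG hQ hlc hQD
  obtain ⟨ψ, hψR, hψD, hψs⟩ := exists_ringHom_periodic hτ hy hφ hinj hgen hD hG hmin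
    fun j h ↦ hlc j (hker ▸ h)
  refine ⟨RingHom.ker ψ, RingHom.ker_isPrime ψ, ?_, ?_, fun s hs hsQ j h ↦ hsQ (j % D) ?_⟩
  · rw [RingHom.comap_ker, hψD, RingHom.ker_comp_of_injective _ τ'.injective]
  · rw [← hker, RingHom.comap_ker, RingHom.comap_ker, hψR]
  · rw [← hker]
    rw [RingHom.mem_ker, hψs s hs, map_eq_zero] at h
    exact h

end Lift

theorem Ideal.comap_pow_mul_eq {R : Type*} [CommRing R] {σ : R →+* R} {q : Ideal R} {d : ℕ}
    (h : q.comap (σ ^ d) = q) (c : ℕ) : q.comap (σ ^ (d * c)) = q := by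
  induction c with
  | zero => exact Ideal.comap_id q
  | succ c ih => rw [Nat.mul_succ, pow_add, RingHom.mul_def, ← Ideal.comap_comap, ih, h]

section Window

universe u

theorem exists_field_point {R : Type u} [CommRing R] (q : Ideal R) [q.IsPrime] (n : ℕ) :
    ∃ (F L : Type u) (_ : Field F) (_ : Field L) (_ : Algebra F L) (_ : IsAlgClosed L)
      (ρ : R →+* F) (α : ℕ → L), RingHom.ker ρ = q ∧
        AlgebraicIndependent F fun i : Fin n ↦ α i := by
  let F := FractionRing (R ⧸ q)
  let K := FractionRing (MvPolynomial (Fin n) F)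
  refine ⟨F, AlgebraicClosure K, inferInstance, inferInstance, inferInstance, inferInstance,
    (algebraMap (R ⧸ q) F).comp (Ideal.Quotient.mk q),
    fun i ↦ if h : i < n then
      algebraMap K _ (algebraMap (MvPolynomial (Fin n) F) K (.X ⟨i, h⟩)) else 0, ?_, ?_⟩
  · rw [RingHom.ker_comp_of_injective _ (IsFractionRing.injective (R ⧸ q) F), Ideal.mk_ker]
  · have hinj : Function.Injective
        (IsScalarTower.toAlgHom F (MvPolynomial (Fin n) F) (AlgebraicClosure K)) := by
      change Function.Injective (algebraMap (MvPolynomial (Fin n) F) (AlgebraicClosure K))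
      rw [IsScalarTower.algebraMap_eq (MvPolynomial (Fin n) F) K (AlgebraicClosure K)]
      exact (algebraMap K _).injective.comp (IsFractionRing.injective _ _)
    convert! (MvPolynomial.algebraicIndependent_X (Fin n) F).map' hinj using 1
    ext i
    simp [IsScalarTower.algebraMap_apply (MvPolynomial (Fin n) F) K (AlgebraicClosure K)]

variable {R S : Type u} [CommRing R] [CommRing S] [Algebra R S] {y : ℕ → S}

theorem exists_bound_primes_truncAdjoin [IsDomain S] {n m : ℕ} (hnm : n ≤ m)
    (halg : ∀ x ∈ truncAdjoin R y m, IsAlgebraic (truncAdjoin R y n) x) :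
    ∃ p : truncAdjoin R y n, p ≠ 0 ∧ ∃ N : ℕ, ∀ Q : Fin (N + 1) → Ideal S,
      (∀ i, (Q i).IsPrime) → (∀ i, (p : S) ∉ Q i) →
        (∀ i j, ∀ x ∈ truncAdjoin R y n, x ∈ Q i ↔ x ∈ Q j) →
          ∃ i j, i < j ∧ ∀ x ∈ truncAdjoin R y m, x ∈ Q i ↔ x ∈ Q j := by
  let A := truncAdjoin R y n
  let B := truncAdjoin R y m
  let ι : A →ₐ[R] B := Subalgebra.inclusion (truncAdjoin_mono hnm)
  let : Algebra A B := ι.toRingHom.toAlgebra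
  have hι : Function.Injective (algebraMap A B) := Subalgebra.inclusion_injective _
  have : FaithfulSMul A B := (faithfulSMul_iff_algebraMap_injective A B).mpr hι
  have : IsScalarTower R A B := .of_algebraMap_eq fun _ ↦ rfl
  have : IsScalarTower A B S := .of_algebraMap_eq fun _ ↦ rfl
  have : Algebra.IsAlgebraic A B :=
    ⟨fun b ↦ (isAlgebraic_algebraMap_iff (A := S) Subtype.val_injective).mp (halg b b.2)⟩
  have : Algebra.FiniteType R B := (Subalgebra.fg_iff_finiteType B).mp <|
    Subalgebra.fg_def.mpr ⟨_, Set.finite_range _, rfl⟩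
  have : Algebra.FiniteType A B := .of_restrictScalars_finiteType R A B
  obtain ⟨p, hp, N, hN⟩ := exists_bound_primes_over (A := A) (B := B)
  refine ⟨p, hp, N, fun Q hQ hpQ hQA ↦ ?_⟩
  obtain ⟨i, j, hij, h⟩ := hN ((Q 0).comap (algebraMap A S)) ((hQ 0).comap _) (hpQ 0)
    (fun i ↦ (Q i).comap (algebraMap B S)) (fun i ↦ (hQ i).comap _)
    fun i ↦ Ideal.ext fun x ↦ hQA i 0 x x.2
  exact ⟨i, j, hij, fun x hx ↦ SetLike.ext_iff.mp h ⟨x, hx⟩⟩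

theorem eval₂_eq_zero_iff_forall_coeff {ι F L : Type*} [Field F] [Field L] [Algebra F L]
    {α : ι → L} (hα : AlgebraicIndependent F α) (ρ : R →+* F) (P : MvPolynomial ι R) :
    MvPolynomial.eval₂ ((algebraMap F L).comp ρ) α P = 0 ↔ ∀ d, ρ (P.coeff d) = 0 := by
  refine ⟨fun h d ↦ by_contra fun hd ↦ eval₂_ne_zero_of_coeff hα ρ hd h, fun h ↦ ?_⟩
  rw [MvPolynomial.eval₂_eq]
  exact Finset.sum_eq_zero fun d _ ↦ by simp [h d]

variable {σ : R →+* R} {τ : S →+* S} (hτ : ∀ r, τ (algebraMap R S r) = algebraMap R S (σ r))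
  (hy : ∀ k, τ (y k) = y (k + 1))
include hτ hy

theorem ControlsVanishing.apply_pow_ne_zero {F L : Type u} [Field F] [Field L] [Algebra F L]
    {φ : S →+* L} {ρ : R →+* F} (hφ : φ.comp (algebraMap R S) = (algebraMap F L).comp ρ)
    {n : ℕ} (hα : ∀ j, AlgebraicIndependent F fun i : Fin n ↦ φ (y (i + j)))
    {k : ℕ} {b : truncAdjoin R y k} {c : R} (h : ControlsVanishing n k b c) {j : ℕ}
    (hc : ρ ((σ ^ j) c) ≠ 0) : φ ((τ ^ j) b) ≠ 0 := by
  have h1 := IsPartialPoint.of_ringHom_comp_pow hτ hy φ k j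
  rw [hφ, RingHom.comp_assoc] at h1
  exact h F L (ρ.comp (σ ^ j)) _ _ h1 (hα j) hc

theorem apply_pow_eq_zero_iff {F L : Type u} [Field F] [Field L] [Algebra F L]
    {φ : S →+* L} {ρ : R →+* F} (hφ : φ.comp (algebraMap R S) = (algebraMap F L).comp ρ)
    {n : ℕ} (hα : ∀ j, AlgebraicIndependent F fun i : Fin n ↦ φ (y (i + j)))
    (P : MvPolynomial (Fin n) R) (j : ℕ) :
    φ ((τ ^ j) (MvPolynomial.aeval (fun i : Fin n ↦ y i) P)) = 0 ↔
      ∀ d, ρ ((σ ^ j) (P.coeff d)) = 0 := by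
  have h := IsPartialPoint.of_ringHom_comp_pow hτ hy φ n j
  rw [hφ] at h
  have hP : MvPolynomial.aeval (fun i : Fin n ↦ y i) P ∈ truncAdjoin R y n := by
    rw [truncAdjoin, Algebra.adjoin_range_eq_range_aeval]
    exact ⟨P, rfl⟩
  have h1 := h.apply_aeval le_rfl P hP
  exact (Eq.congr_left h1).trans (eval₂_eq_zero_iff_forall_coeff (hα j) (ρ.comp (σ ^ j)) P)

theorem exists_periodic_on_truncAdjoin [IsDomain S] {n m : ℕ} (hnm : n ≤ m)
    (halg : ∀ x ∈ truncAdjoin R y m, IsAlgebraic (truncAdjoin R y n) x) :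
    ∃ p : truncAdjoin R y n, p ≠ 0 ∧ ∃ N : ℕ, ∀ (F L : Type u) [Field F] [Field L] [Algebra F L]
      (φ : S →+* L) (ρ : R →+* F), φ.comp (algebraMap R S) = (algebraMap F L).comp ρ →
      (∀ j, AlgebraicIndependent F fun i : Fin n ↦ φ (y (i + j))) →
      (∀ j, φ ((τ ^ j) p) ≠ 0) → ∀ d, (∀ r, ρ ((σ ^ d) r) = 0 ↔ ρ r = 0) →
      ∃ i e, 0 < e ∧ e ≤ N ∧ ∀ x ∈ truncAdjoin R y m,
        φ ((τ ^ (i * d)) ((τ ^ (e * d)) x)) = 0 ↔ φ ((τ ^ (i * d)) x) = 0 := by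
  obtain ⟨p, hp, N, hN⟩ := exists_bound_primes_truncAdjoin hnm halg
  refine ⟨p, hp, N, fun F L _ _ _ φ ρ hφ hα hpφ d hd ↦ ?_⟩
  have hd' (i : ℕ) (r : R) : ρ ((σ ^ (i * d)) r) = 0 ↔ ρ r = 0 := by
    induction i with
    | zero => simp
    | succ i ih => rw [Nat.succ_mul, add_comm, pow_add, ← ih]; exact hd _
  obtain ⟨i, j, hij, h⟩ := hN (fun i ↦ RingHom.ker (φ.comp (τ ^ (i.1 * d))))
    (fun i ↦ RingHom.ker_isPrime _) (fun i ↦ hpφ _) fun i j x hx ↦ by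
      obtain ⟨P, rfl⟩ := exists_aeval_eq_of_mem_truncAdjoin hx
      refine (apply_pow_eq_zero_iff hτ hy hφ hα P _).trans
        (Iff.trans ?_ (apply_pow_eq_zero_iff hτ hy hφ hα P _).symm)
      simp only [hd']
  refine ⟨i, j - i, by omega, by omega, fun x hx ↦ ?_⟩
  refine Iff.trans ?_ (h x hx).symm
  have e : j.1 * d = i * d + (j - i) * d := by rw [← add_mul]; congr 1; omega
  rw [RingHom.mem_ker, e, pow_add]
  rfl

end Window

/-- Generically on the base, periodic primes lift to periodic primes avoiding the orbit of
a given nonzero element. -/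
def LiftsPrimes {R S : Type*} [CommRing R] [CommRing S] [Algebra R S] (σ : R →+* R)
    (τ : S →+* S) : Prop :=
  ∀ s : S, s ≠ 0 → ∃ r : R, r ≠ 0 ∧ ∃ l : ℕ, 1 ≤ l ∧ ∀ d : ℕ, 1 ≤ d →
    ∀ q : Ideal R, q.IsPrime → q.comap (σ ^ d) = q → (∀ n, (σ ^ n) r ∉ q) →
      ∃ q' : Ideal S, q'.IsPrime ∧ q'.comap (τ ^ (l * d)) = q' ∧
        q'.comap (algebraMap R S) = q ∧ ∀ n, (τ ^ n) s ∉ q'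

section Window

universe u

variable {R S : Type u} [CommRing R] [IsDomain R] [CommRing S] [IsDomain S] [Algebra R S]
  {y : ℕ → S} {σ : R →+* R} {τ : S →+* S}
  (hτ : ∀ r, τ (algebraMap R S r) = algebraMap R S (σ r))
  (hy : ∀ k, τ (y k) = y (k + 1)) (hinj : Function.Injective τ)
include hτ hy hinj

omit [IsDomain R] in
theorem isAlgebraic_of_isAlgebraic_gen {n : ℕ} (hu : IsAlgebraic (truncAdjoin R y n) (y n))
    (k : ℕ) : ∀ x ∈ truncAdjoin R y k, IsAlgebraic (truncAdjoin R y n) x := by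
  intro x hx
  obtain ⟨f, hf0, hf⟩ := hu
  refine isAlgebraic_of_mem_truncAdjoin (θ := RingHom.id S) (n := n) (fun x hx ↦ ?_)
    (fun k hk ↦ ?_) hx
  · exact isAlgebraic_algebraMap (⟨x, hx⟩ : truncAdjoin R y n)
  · obtain ⟨j, rfl⟩ := Nat.exists_eq_add_of_le hk
    refine ⟨f.map (truncShift hτ hy le_rfl), ?_, ?_⟩
    · rw [aeval_map_truncShift, hf, map_zero]
    · rw [leadingCoeff_map_of_injective (truncShift_injective hτ hy hinj le_rfl)]
      have h0 := (truncShift_injective hτ hy hinj (le_refl (n + j))).ne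
        (leadingCoeff_ne_zero.mpr hf0)
      rw [map_zero] at h0
      exact fun h ↦ h0 (Subtype.ext h)

omit [IsDomain R] [IsDomain S] in
theorem exists_relation {n : ℕ} (hu : IsAlgebraic (truncAdjoin R y n) (y n)) {k : ℕ}
    (hk : n ≤ k) : ∃ G : (truncAdjoin R y k)[X], G ≠ 0 ∧ aeval (y k) G = 0 := by
  obtain ⟨f, hf0, hf⟩ := hu
  obtain ⟨j, rfl⟩ := Nat.exists_eq_add_of_le hk
  refine ⟨f.map (truncShift hτ hy le_rfl), ?_, ?_⟩
  · rwa [Ne, Polynomial.map_eq_zero_iff (truncShift_injective hτ hy hinj le_rfl)]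
  · rw [aeval_map_truncShift, hf, map_zero]

omit [IsDomain R] [IsDomain S] in
theorem exists_minimal_relation {n : ℕ} (hu : IsAlgebraic (truncAdjoin R y n) (y n)) {k : ℕ}
    (hk : n ≤ k) : ∃ G : (truncAdjoin R y k)[X], G ≠ 0 ∧ aeval (y k) G = 0 ∧
      ∀ f : (truncAdjoin R y k)[X], f ≠ 0 → aeval (y k) f = 0 → G.natDegree ≤ f.natDegree := by
  classical
  have h : ∃ d, ∃ G : (truncAdjoin R y k)[X], G ≠ 0 ∧ aeval (y k) G = 0 ∧ G.natDegree = d := by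
    obtain ⟨G, h1, h2⟩ := exists_relation hτ hy hinj hu hk
    exact ⟨_, G, h1, h2, rfl⟩
  obtain ⟨G, h1, h2, h3⟩ := Nat.find_spec h
  exact ⟨G, h1, h2, fun f hf0 hf ↦ h3.trans_le (Nat.find_min' h ⟨f, hf0, hf, rfl⟩)⟩

omit [IsDomain R] [IsDomain S] in
/-- A relation of minimal degree among all relations at late stages, so that it stays of minimal
degree under shifts. -/
theorem exists_stable_relation {n : ℕ} (hu : IsAlgebraic (truncAdjoin R y n) (y n)) {M : ℕ}
    (hM : n ≤ M) : ∃ m, M ≤ m ∧ ∃ G : (truncAdjoin R y m)[X], G ≠ 0 ∧ aeval (y m) G = 0 ∧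
      ∀ j, ∀ f : (truncAdjoin R y (m + j))[X], f ≠ 0 → aeval (y (m + j)) f = 0 →
        G.natDegree ≤ f.natDegree := by
  classical
  have h : ∃ d, ∃ m, M ≤ m ∧ ∃ G : (truncAdjoin R y m)[X], G ≠ 0 ∧ aeval (y m) G = 0 ∧
      G.natDegree = d := by
    obtain ⟨G, h1, h2⟩ := exists_relation hτ hy hinj hu hM
    exact ⟨_, M, le_rfl, G, h1, h2, rfl⟩
  obtain ⟨m, hm, G, h1, h2, h3⟩ := Nat.find_spec h
  exact ⟨m, hm, G, h1, h2, fun j f hf0 hf ↦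
    h3.trans_le (Nat.find_min' h ⟨m + j, by omega, f, hf0, hf, rfl⟩)⟩

theorem liftsPrimes_of_window (hgen : Algebra.adjoin R (Set.range y) = ⊤) {n : ℕ}
    (hind : AlgebraicIndependent R fun i : Fin n ↦ y i)
    (hu : IsAlgebraic (truncAdjoin R y n) (y n))
    (hv : IsAlgebraic (Algebra.adjoin R (Set.range fun i : Fin n ↦ y (i + 1))) (y 0)) :
    LiftsPrimes σ τ := by
  intro s hs
  have halg := isAlgebraic_of_isAlgebraic_gen hτ hy hinj hu
  have hctrl {k : ℕ} (hk : n ≤ k) {b : truncAdjoin R y k} (hb : b ≠ 0) :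
      ∃ c : R, c ≠ 0 ∧ ControlsVanishing n k b c :=
    exists_controlsVanishing hk hb (halg k b b.2)
  obtain ⟨k₀, hk₀⟩ := exists_mem_truncAdjoin hgen s
  obtain ⟨m, hm, G, hG0, hG, hGmin⟩ :=
    exists_stable_relation hτ hy hinj hu (le_max_left n k₀)
  have hnm : n ≤ m := le_of_max_le_left hm
  have hsm : s ∈ truncAdjoin R y m := truncAdjoin_mono (le_of_max_le_right hm) hk₀
  have hinit (k : ℕ) : ∃ c : R, c ≠ 0 ∧ ∃ G : (truncAdjoin R y (n + k))[X], G ≠ 0 ∧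
      aeval (y (n + k)) G = 0 ∧ (∀ f : (truncAdjoin R y (n + k))[X], f ≠ 0 →
        aeval (y (n + k)) f = 0 → G.natDegree ≤ f.natDegree) ∧
      ControlsVanishing n (n + k) G.leadingCoeff c := by
    obtain ⟨G, h1, h2, h3⟩ := exists_minimal_relation hτ hy hinj hu (Nat.le_add_right n k)
    obtain ⟨c, h4, h5⟩ := hctrl (Nat.le_add_right n k) (leadingCoeff_ne_zero.mpr h1)
    exact ⟨c, h4, G, h1, h2, h3, h5⟩
  choose c hc Gk hGk0 hGk hGkmin hGkc using hinit
  obtain ⟨W, hW0, hW⟩ := hv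
  have hWlc : Subalgebra.inclusion (adjoin_range_succ_le n) W.leadingCoeff ≠ 0 := fun h ↦
    hW0 (leadingCoeff_eq_zero.mp
      (Subalgebra.inclusion_injective _ (h.trans (map_zero _).symm)))
  obtain ⟨p, hp, N, hN⟩ := exists_periodic_on_truncAdjoin hτ hy hnm (halg m)
  obtain ⟨cG, hcG, hcG'⟩ := hctrl hnm (leadingCoeff_ne_zero.mpr hG0)
  obtain ⟨cs, hcs, hcs'⟩ := hctrl hnm (b := ⟨s, hsm⟩) fun h ↦ hs (congrArg Subtype.val h)
  obtain ⟨cW, hcW, hcW'⟩ := hctrl n.le_succ hWlc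
  obtain ⟨cp, hcp, hcp'⟩ := hctrl le_rfl hp
  let r := cG * cs * cW * cp * ∏ k ∈ Finset.range m, c k
  have hr : r ≠ 0 := mul_ne_zero (mul_ne_zero (mul_ne_zero (mul_ne_zero hcG hcs) hcW) hcp)
    (Finset.prod_ne_zero_iff.mpr fun k _ ↦ hc k)
  replace hcG' := hcG'.of_dvd (c' := r) (((dvd_mul_right _ _).trans (dvd_mul_right _ _)).trans
    (dvd_mul_right _ _) |>.trans (dvd_mul_right _ _))
  replace hcs' := hcs'.of_dvd (c' := r) (((dvd_mul_left _ _).trans (dvd_mul_right _ _)).trans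
    (dvd_mul_right _ _) |>.trans (dvd_mul_right _ _))
  replace hcW' := hcW'.of_dvd (c' := r) (((dvd_mul_left _ _).trans (dvd_mul_right _ _)).trans
    (dvd_mul_right _ _))
  replace hcp' := hcp'.of_dvd (c' := r) ((dvd_mul_left _ _).trans (dvd_mul_right _ _))
  refine ⟨r, hr, N.factorial, N.factorial_pos, fun d hd q hq hqd hqr ↦ ?_⟩
  obtain ⟨F, L, _, _, _, _, ρ, α, hρ, hα⟩ := exists_field_point q n
  have hρr (k : ℕ) : ρ ((σ ^ k) r) ≠ 0 := fun h ↦ hqr k (hρ ▸ h)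
  have hrel (k : ℕ) (hk : n ≤ k) : ∃ m j, k = m + j ∧ j + n ≤ k ∧
      ∃ G : (truncAdjoin R y m)[X], G ≠ 0 ∧ aeval (y m) G = 0 ∧
      (∀ f : (truncAdjoin R y (m + j))[X], f ≠ 0 → aeval (y (m + j)) f = 0 →
        G.natDegree ≤ f.natDegree) ∧ ControlsVanishing n m G.leadingCoeff r := by
    rcases lt_or_ge k m with hkm | hkm
    · obtain ⟨k, rfl⟩ := Nat.exists_eq_add_of_le hk
      exact ⟨n + k, 0, rfl, by omega, Gk k, hGk0 k, hGk k, hGkmin k, (hGkc k).of_dvd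
        ((Finset.dvd_prod_of_mem c (Finset.mem_range.mpr (by omega))).trans
          (dvd_mul_left _ _))⟩
    · obtain ⟨j, rfl⟩ := Nat.exists_eq_add_of_le hkm
      exact ⟨m, j, rfl, by omega, G, hG0, hG, hGmin j, hcG'⟩
  obtain ⟨φ, hφ, hφα⟩ := exists_ringHom_forall_algebraicIndependent hτ hy hinj hgen hind
    hrel hW hcW' hρr hα
  have hqd' (i : ℕ) (x : R) : ρ ((σ ^ (d * i)) x) = 0 ↔ ρ x = 0 := by
    rw [← RingHom.mem_ker, ← RingHom.mem_ker (f := ρ), hρ, ← Ideal.mem_comap,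
      Ideal.comap_pow_mul_eq hqd]
  obtain ⟨i, e, he0, heN, he⟩ := hN F L φ ρ hφ hφα
    (fun j ↦ hcp'.apply_pow_ne_zero hτ hy hφ hφα (hρr j)) d
    fun x ↦ by simpa using hqd' 1 x
  let Q := RingHom.ker (φ.comp (τ ^ (i * d)))
  have hQ (x : S) (j : ℕ) : (τ ^ j) x ∈ Q ↔ φ ((τ ^ (i * d + j)) x) = 0 := by
    rw [pow_add]; rfl
  obtain ⟨q', hq', hq'D, hq'R, hq's⟩ := exists_prime_of_periodic_truncAdjoin hτ hy hinj hgen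
    (Nat.mul_pos he0 hd) hG hGmin (Q := Q) (RingHom.ker_isPrime _)
    (fun j h ↦ hcG'.apply_pow_ne_zero hτ hy hφ hφα (hρr _) ((hQ _ j).mp h)) he
  obtain ⟨a, ha⟩ := Nat.dvd_factorial he0 heN
  refine ⟨q', hq', ?_, hq'R.trans (Ideal.ext fun x ↦ ?_), hq's s hsm fun j h ↦
    hcs'.apply_pow_ne_zero hτ hy hφ hφα (hρr _) ((hQ _ j).mp h)⟩
  · rw [ha, mul_right_comm]
    exact Ideal.comap_pow_mul_eq hq'D a
  · have h1 : φ (algebraMap R S ((σ ^ (i * d)) x)) = algebraMap F L (ρ ((σ ^ (i * d)) x)) :=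
      congrArg (· ((σ ^ (i * d)) x)) hφ
    rw [Ideal.mem_comap, RingHom.mem_ker, RingHom.comp_apply, pow_algebraMap hτ, h1,
      map_eq_zero, mul_comm, hqd', ← hρ, RingHom.mem_ker]

end Window

section Independent

variable {R S : Type*} [CommRing R] [CommRing S] [Algebra R S] {y : ℕ → S} {σ : R →+* R}
  {τ : S →+* S}

theorem liftsPrimes_of_algebraicIndependent
    (hτ : ∀ r, τ (algebraMap R S r) = algebraMap R S (σ r)) (hy : ∀ k, τ (y k) = y (k + 1))
    (hgen : Algebra.adjoin R (Set.range y) = ⊤) (hind : AlgebraicIndependent R y) :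
    LiftsPrimes σ τ := by
  have hsurj : Function.Surjective (MvPolynomial.aeval (R := R) y) := by
    rw [← AlgHom.range_eq_top, ← Algebra.adjoin_range_eq_range_aeval, hgen]
  let E : MvPolynomial ℕ R ≃ₐ[R] S := AlgEquiv.ofBijective (MvPolynomial.aeval y) ⟨hind, hsurj⟩
  have hEC (a : R) : E (MvPolynomial.C a) = algebraMap R S a := MvPolynomial.aeval_C y a
  have hEX (i : ℕ) : E (MvPolynomial.X i) = y i := MvPolynomial.aeval_X y i
  have hE (j : ℕ) (P : MvPolynomial ℕ R) : (τ ^ j) (E P) =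
      E (MvPolynomial.rename (· + j) (MvPolynomial.map (σ ^ j) P)) := by
    have h : (τ ^ j).comp (E : MvPolynomial ℕ R →+* S) = (E : MvPolynomial ℕ R →+* S).comp
        ((MvPolynomial.rename (R := R) (· + j) :
          MvPolynomial ℕ R →+* MvPolynomial ℕ R).comp (MvPolynomial.map (σ ^ j))) := by
      refine MvPolynomial.ringHom_ext (fun a ↦ ?_) fun i ↦ ?_
      · simp [hEC, ← pow_algebraMap hτ, -RingHom.coe_pow]
      · simp [hEX, pow_gen hy, -RingHom.coe_pow]
    exact congrArg (· P) h
  intro s hs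
  obtain ⟨P, rfl⟩ := E.surjective s
  obtain ⟨m, hm⟩ := MvPolynomial.ne_zero_iff.mp ((map_ne_zero_iff E E.injective).mp hs)
  refine ⟨P.coeff m, hm, 1, le_rfl, fun d _ q hq hqd hqr ↦ ?_⟩
  let Q : Ideal S := RingHom.ker ((MvPolynomial.map (σ := ℕ) (Ideal.Quotient.mk q)).comp
    (E.symm : S →+* MvPolynomial ℕ R))
  have hQ (j : ℕ) (P : MvPolynomial ℕ R) :
      (τ ^ j) (E P) ∈ Q ↔ ∀ m, (σ ^ j) (P.coeff m) ∈ q := by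
    rw [hE, RingHom.mem_ker, RingHom.comp_apply, RingHom.coe_coe, AlgEquiv.symm_apply_apply,
      MvPolynomial.map_rename, map_eq_zero_iff _ (MvPolynomial.rename_injective _
        (add_left_injective j)), MvPolynomial.ext_iff]
    simp [MvPolynomial.coeff_map, Ideal.Quotient.eq_zero_iff_mem]
  refine ⟨Q, RingHom.ker_isPrime _, Ideal.ext fun x ↦ ?_, Ideal.ext fun x ↦ ?_, fun n h ↦
    hqr n ((hQ n P).mp h m)⟩
  · obtain ⟨P, rfl⟩ := E.surjective x
    rw [one_mul, Ideal.mem_comap, hQ]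
    refine Iff.trans (forall_congr' fun m ↦ ?_) (hQ 0 P).symm
    rw [← Ideal.mem_comap, hqd]
    rfl
  · rw [Ideal.mem_comap, ← hEC, RingHom.mem_ker, RingHom.comp_apply, RingHom.coe_coe,
      AlgEquiv.symm_apply_apply, MvPolynomial.map_C, map_eq_zero_iff _ (MvPolynomial.C_injective _ _),
      Ideal.Quotient.eq_zero_iff_mem]

end Independent

section Shift

variable {R S : Type*} [CommRing R] [CommRing S] [Algebra R S] {σ : R →+* R} {τ : S →+* S}

/-- Lifting of primes may be checked on a subalgebra containing the image of a power of the
endomorphism. -/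
theorem LiftsPrimes.of_subalgebra (hτ : ∀ r, τ (algebraMap R S r) = algebraMap R S (σ r))
    (hinj : Function.Injective τ) (A : Subalgebra R S) {τ' : A →+* A}
    (hτ' : ∀ a, (τ' a : S) = τ a) {j : ℕ} (hj : ∀ x, (τ ^ j) x ∈ A)
    (h : LiftsPrimes σ τ') : LiftsPrimes σ τ := by
  let θ : S →+* A := (τ ^ j).codRestrict A hj
  have hpow (n : ℕ) (a : A) : (((τ' ^ n) a : A) : S) = (τ ^ n) a := by
    induction n generalizing a with
    | zero => rfl
    | succ n ih =>
      rw [pow_succ, pow_succ, RingHom.mul_def, RingHom.mul_def, RingHom.comp_apply, ih, hτ']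
      rfl
  intro s hs
  have hθ (x : S) (i : ℕ) : (((τ' ^ i) (θ x) : A) : S) = (τ ^ (i + j)) x := by
    rw [hpow, pow_add]; rfl
  have hs' : θ s ≠ 0 := fun h0 ↦ hs <| by
    have h1 : (τ ^ j) s = 0 := congrArg Subtype.val h0
    refine (map_eq_zero_iff _ ?_).mp h1
    rw [RingHom.coe_pow]
    exact hinj.iterate j
  obtain ⟨r, hr, l, hl, H⟩ := h (θ s) hs'
  refine ⟨r, hr, l, hl, fun d hd q hq hqd hqr ↦ ?_⟩
  obtain ⟨Q, hQ, hQd, hQR, hQs⟩ := H d hd q hq hqd hqr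
  obtain ⟨i, hi⟩ := Nat.exists_eq_add_of_le' (Nat.le_mul_of_pos_left j (Nat.mul_pos hl hd))
  have hcomm (x : S) (n : ℕ) : (τ' ^ i) (θ ((τ ^ n) x)) = (τ' ^ n) ((τ' ^ i) (θ x)) := by
    refine Subtype.ext ?_
    rw [hθ, hpow, hθ, ← RingHom.comp_apply, ← RingHom.comp_apply, ← RingHom.mul_def,
      ← RingHom.mul_def, ← pow_add, ← pow_add, add_comm n]
  refine ⟨Q.comap ((τ' ^ i).comp θ), inferInstance, Ideal.ext fun x ↦ ?_, Ideal.ext fun x ↦ ?_,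
    fun n hn ↦ ?_⟩
  · rw [Ideal.mem_comap, Ideal.mem_comap, RingHom.comp_apply, hcomm, ← Ideal.mem_comap, hQd]
    rfl
  · have h1 : (τ' ^ i) (θ (algebraMap R S x)) = algebraMap R A ((σ ^ (l * d * j)) x) :=
      Subtype.ext <| by rw [hθ, ← hi, pow_algebraMap hτ]; rfl
    rw [Ideal.mem_comap, Ideal.mem_comap, RingHom.comp_apply, h1, ← Ideal.mem_comap, hQR,
      ← Ideal.mem_comap, mul_comm l, mul_assoc, Ideal.comap_pow_mul_eq hqd]
  · rw [Ideal.mem_comap, RingHom.comp_apply, hcomm, ← RingHom.comp_apply, ← RingHom.mul_def,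
      ← pow_add] at hn
    exact hQs _ hn

end Shift

section Generator

universe u

variable {R S : Type u} [CommRing R] [IsDomain R] [CommRing S] [IsDomain S] [Algebra R S]
  {y : ℕ → S} {σ : R →+* R} {τ : S →+* S}

theorem liftsPrimes_of_not_algebraicIndependent
    (hτ : ∀ r, τ (algebraMap R S r) = algebraMap R S (σ r)) (hy : ∀ k, τ (y k) = y (k + 1))
    (hinj : Function.Injective τ) (hgen : Algebra.adjoin R (Set.range y) = ⊤) {n : ℕ}
    (hind : AlgebraicIndependent R fun i : Fin n ↦ y i)
    (hind' : AlgebraicIndependent R fun i : Fin n ↦ y (i + 1))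
    (hdep : ¬ AlgebraicIndependent R fun i : Fin (n + 1) ↦ y i) : LiftsPrimes σ τ := by
  refine liftsPrimes_of_window hτ hy hinj hgen hind ?_ ?_
  · by_contra h
    have h1 : Transcendental (Algebra.adjoin R (Set.range fun i : Fin n ↦ y i)) (y n) := h
    rw [← hind.option_iff_transcendental] at h1
    refine hdep ((algebraicIndependent_equiv' finSuccEquivLast ?_).mpr h1)
    ext i
    induction i using Fin.lastCases <;> simp
  · by_contra h
    have h1 : Transcendental (Algebra.adjoin R (Set.range fun i : Fin n ↦ y (i + 1))) (y 0) := h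
    rw [← hind'.option_iff_transcendental] at h1
    refine hdep ((algebraicIndependent_equiv' (finSuccEquiv n) ?_).mpr h1)
    ext i
    induction i using Fin.cases <;> simp

theorem liftsPrimes_of_adjoin_range (hRS : Function.Injective (algebraMap R S))
    (hτ : ∀ r, τ (algebraMap R S r) = algebraMap R S (σ r)) (hy : ∀ k, τ (y k) = y (k + 1))
    (hinj : Function.Injective τ) (hgen : Algebra.adjoin R (Set.range y) = ⊤) :
    LiftsPrimes σ τ := by
  classical
  by_cases hind : AlgebraicIndependent R y
  · exact liftsPrimes_of_algebraicIndependent hτ hy hgen hind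
  have hex : ∃ n j, ¬ AlgebraicIndependent R fun i : Fin (n + 1) ↦ y (i + j) := by
    by_contra! h
    refine hind (algebraicIndependent_of_finite_type fun t ht ↦ ?_)
    obtain ⟨N, hN⟩ := ht.bddAbove
    exact (h N 0).comp (fun i : t ↦ (⟨i, Nat.lt_succ_of_le (hN i.2)⟩ : Fin (N + 1)))
      fun a b hab ↦ Subtype.ext (congrArg Fin.val hab)
  obtain ⟨j, hj⟩ := Nat.find_spec hex
  have hmin : ∀ m < Nat.find hex, _ := fun m ↦ Nat.find_min hex
  generalize Nat.find hex = n at hj hmin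
  have hwin (k : ℕ) : AlgebraicIndependent R fun i : Fin n ↦ y (i + k) := by
    cases n with
    | zero => exact algebraicIndependent_empty_type_iff.mpr hRS
    | succ n =>
      have h := hmin n n.lt_succ_self
      push Not at h
      exact h k
  let A := Algebra.adjoin R (Set.range fun k ↦ y (k + j))
  have hyA (k : ℕ) : y (k + j) ∈ A := Algebra.subset_adjoin ⟨k, rfl⟩
  have hpowA (p : ℕ) (hp : ∀ k, y (k + p) ∈ A) (x : S) : (τ ^ p) x ∈ A := by
    have hx : x ∈ Algebra.adjoin R (Set.range y) := hgen ▸ trivial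
    induction hx using Algebra.adjoin_induction with
    | mem x hx =>
      obtain ⟨i, rfl⟩ := hx
      rw [pow_gen hy]
      exact hp i
    | algebraMap r => rw [pow_algebraMap hτ]; exact A.algebraMap_mem _
    | add x x' _ _ h h' => rw [map_add]; exact add_mem h h'
    | mul x x' _ _ h h' => rw [map_mul]; exact mul_mem h h'
  have hτA (x : S) (hx : x ∈ A) : τ x ∈ A := by
    induction hx using Algebra.adjoin_induction with
    | mem x hx =>
      obtain ⟨i, rfl⟩ := hx
      simp only [hy]
      rw [add_right_comm]
      exact hyA _
    | algebraMap r => rw [hτ]; exact A.algebraMap_mem _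
    | add x x' _ _ h h' => rw [map_add]; exact add_mem h h'
    | mul x x' _ _ h h' => rw [map_mul]; exact mul_mem h h'
  let τ' : A →+* A := τ.restrict A A hτA
  let z : ℕ → A := fun k ↦ ⟨y (k + j), hyA k⟩
  have hz {ι : Type} (f : ι → ℕ) : AlgebraicIndependent R (fun i ↦ y (f i + j)) ↔
      AlgebraicIndependent R fun i ↦ z (f i) :=
    A.val.algebraicIndependent_iff (x := fun i ↦ z (f i)) Subtype.val_injective
  refine LiftsPrimes.of_subalgebra hτ hinj A (τ' := τ') (fun _ ↦ rfl) (hpowA j hyA)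
    (liftsPrimes_of_not_algebraicIndependent (y := z) (n := n) (fun r ↦ Subtype.ext (hτ r))
      (fun k ↦ Subtype.ext ?_) (fun a b h ↦ Subtype.ext (hinj (congrArg Subtype.val h))) ?_
      ((hz _).mp (hwin j)) ((hz _).mp ?_) fun h ↦ hj ((hz _).mpr h))
  · exact (hy _).trans (by rw [add_right_comm])
  · refine Subalgebra.map_injective (f := A.val) Subtype.val_injective ?_
    rw [AlgHom.map_adjoin, Algebra.map_top, Subalgebra.range_val, ← Set.range_comp]
    rfl
  · simpa only [add_assoc] using hwin (1 + j)

end Generator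

theorem LiftsPrimes.trans {R A S : Type*} [CommRing R] [CommRing A] [CommRing S] [Algebra R A]
    [Algebra A S] [Algebra R S] [IsScalarTower R A S] {σ : R →+* R} {ρ : A →+* A} {τ : S →+* S}
    (h : LiftsPrimes σ ρ) (h' : LiftsPrimes ρ τ) : LiftsPrimes σ τ := by
  intro s hs
  obtain ⟨a, ha, l', hl', H'⟩ := h' s hs
  obtain ⟨r, hr, l, hl, H⟩ := h a ha
  refine ⟨r, hr, l' * l, Nat.mul_pos hl' hl, fun d hd q hq hqd hqr ↦ ?_⟩
  obtain ⟨p, hp, hpd, hpq, hpa⟩ := H d hd q hq hqd hqr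
  obtain ⟨q', hq', hqd', hqp, hqs⟩ := H' (l * d) (Nat.mul_pos hl hd) p hp hpd hpa
  refine ⟨q', hq', by rwa [mul_assoc], ?_, hqs⟩
  rw [IsScalarTower.algebraMap_eq R A S, ← Ideal.comap_comap, hqp, hpq]

section Finite

universe u

theorem liftsPrimes_of_finset {S : Type u} [CommRing S] [IsDomain S] {τ : S →+* S}
    (hinj : Function.Injective τ) (T : Finset S) {R : Type u} [CommRing R] [IsDomain R]
    [Algebra R S] (hRS : Function.Injective (algebraMap R S)) {σ : R →+* R}
    (hτ : ∀ r, τ (algebraMap R S r) = algebraMap R S (σ r))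
    (hgen : Algebra.adjoin R {x | ∃ t ∈ T, ∃ n, (τ ^ n) t = x} = ⊤) : LiftsPrimes σ τ := by
  classical
  induction T using Finset.induction_on generalizing R with
  | empty =>
    refine liftsPrimes_of_adjoin_range (y := fun _ ↦ 0) hRS hτ (fun _ ↦ map_zero τ) hinj
      (top_unique (hgen ▸ Algebra.adjoin_mono ?_))
    rintro x ⟨t, ht, -⟩
    exact absurd ht (Finset.notMem_empty t)
  | insert t T _ ih =>
    let A := Algebra.adjoin R (Set.range fun n ↦ (τ ^ n) t)
    have htA (n : ℕ) : (τ ^ n) t ∈ A := Algebra.subset_adjoin ⟨n, rfl⟩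
    have hsucc (n : ℕ) : τ ((τ ^ n) t) = (τ ^ (n + 1)) t := by rw [pow_succ']; rfl
    have hτA (x : S) (hx : x ∈ A) : τ x ∈ A := by
      induction hx using Algebra.adjoin_induction with
      | mem x hx =>
        obtain ⟨n, rfl⟩ := hx
        simpa only [hsucc] using htA (n + 1)
      | algebraMap r => rw [hτ]; exact A.algebraMap_mem _
      | add x x' _ _ h h' => rw [map_add]; exact add_mem h h'
      | mul x x' _ _ h h' => rw [map_mul]; exact mul_mem h h'
    let ρ : A →+* A := τ.restrict A A hτA
    have hRA : LiftsPrimes σ ρ := by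
      refine liftsPrimes_of_adjoin_range (y := fun n ↦ (⟨(τ ^ n) t, htA n⟩ : A))
        (fun a b h ↦ hRS (congrArg Subtype.val h)) (fun r ↦ Subtype.ext (hτ r))
        (fun n ↦ Subtype.ext (hsucc n))
        (fun a b h ↦ Subtype.ext (hinj (congrArg Subtype.val h)))
        (Subalgebra.map_injective (f := A.val) Subtype.val_injective ?_)
      rw [AlgHom.map_adjoin, Algebra.map_top, Subalgebra.range_val, ← Set.range_comp]
      rfl
    refine hRA.trans (ih Subtype.val_injective (fun _ ↦ rfl) (Algebra.eq_top_iff.mpr fun x ↦ ?_))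
    have hx : x ∈ Algebra.adjoin R {x | ∃ t' ∈ insert t T, ∃ n, (τ ^ n) t' = x} := hgen ▸ trivial
    let B := Algebra.adjoin A {x | ∃ t ∈ T, ∃ n, (τ ^ n) t = x}
    have hAB (a : A) : (a : S) ∈ B := B.algebraMap_mem a
    induction hx using Algebra.adjoin_induction with
    | mem x hx =>
      obtain ⟨t', ht', n, rfl⟩ := hx
      rcases Finset.mem_insert.mp ht' with rfl | ht'
      · exact hAB ⟨_, htA n⟩
      · exact Algebra.subset_adjoin ⟨t', ht', n, rfl⟩
    | algebraMap r => exact hAB (algebraMap R A r)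
    | add x x' _ _ h h' => exact add_mem h h'
    | mul x x' _ _ h h' => exact mul_mem h h'

end Finite

theorem PseudoPrime.exists_prime_comap_eq_bot {S : Type*} [CommRing S] {σ : S →+* S}
    {R : Type*} [CommRing R] [IsDomain R] {f : R →+* S} {m : ℕ} {p : Fin m → Ideal S}
    (hp : ∀ i, PseudoPrime σ (p i)) (hbot : (⨅ i, p i).comap f = ⊥) :
    ∃ Q : Ideal S, Q.IsPrime ∧ Q.comap f = ⊥ ∧ ∃ d, 1 ≤ d ∧ Q.comap (σ ^ d) = Q := by
  have h1 : Finset.univ.inf (fun i ↦ (p i).comap f) ≤ (⊥ : Ideal R) := by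
    rw [Finset.inf_univ_eq_iInf, ← Ideal.comap_iInf, hbot]
  obtain ⟨i, -, hi⟩ := (Ideal.isPrime_bot (α := R)).inf_le'.mp h1
  obtain ⟨d, hd, q, hq, hqd, hpq⟩ := hp i
  have h2 : (Finset.range d).inf (fun j ↦ (q.comap (σ ^ j)).comap f) ≤ (⊥ : Ideal R) := by
    refine le_trans (le_of_eq ?_) hi
    simp_rw [hpq, Finset.inf_eq_iInf, Ideal.comap_iInf]
  obtain ⟨j, -, hj⟩ := (Ideal.isPrime_bot (α := R)).inf_le'.mp h2
  refine ⟨q.comap (σ ^ j), inferInstance, le_bot_iff.mp hj, d, hd, ?_⟩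
  rw [Ideal.comap_comap, ← RingHom.mul_def, ← pow_add, add_comm, pow_add, RingHom.mul_def,
    ← Ideal.comap_comap, hqd]

/-- A difference analogue of Chevalley's theorem: let `R ⊆ S` be `σ`-rings with `S`
finitely `σ`-generated over `R`, `R` a `σ`-domain, and the zero ideal of `S` a finite
intersection of `σ`-pseudo prime ideals.  Then there are `0 ≠ r ∈ R` and `l ≥ 1` such
that every `σ^d`-prime ideal `q` of `R` avoiding the `σ`-orbit of `r` lifts to a
`σ^{ld}`-prime ideal of `S`. -/
theorem sigma_chevalley
    {S : Type*} [CommRing S] (σ : S →+* S) (R : Subring S)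
    (σR : ↥R →+* ↥R) (hσR : ∀ x : ↥R, (σR x : S) = σ ↑x)
    (hfin : ∃ T : Finset S,
      Subring.closure ((R : Set S) ∪ {x : S | ∃ t ∈ T, ∃ n : ℕ, (⇑σ)^[n] t = x}) = ⊤)
    (hdom : IsDomain ↥R) (hinj : Function.Injective σR)
    (hzero : ∃ (m : ℕ) (p : Fin m → Ideal S), (∀ i, PseudoPrime σ (p i)) ∧ (⨅ i, p i) = ⊥) :
    ∃ r : ↥R, r ≠ 0 ∧ ∃ l : ℕ, 1 ≤ l ∧
      ∀ d : ℕ, 1 ≤ d → ∀ q : Ideal ↥R, q.IsPrime → Ideal.comap (σR ^ d) q = q →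
        (∀ n : ℕ, (⇑σR)^[n] r ∉ q) →
        ∃ q' : Ideal S, q'.IsPrime ∧ Ideal.comap (σ ^ (l * d)) q' = q' ∧
          Ideal.comap R.subtype q' = q := by
  classical
  obtain ⟨m, p, hp, hpbot⟩ := hzero
  obtain ⟨Q, hQ, hQR, e, he, hQe⟩ := PseudoPrime.exists_prime_comap_eq_bot (f := R.subtype) hp
    (by rw [hpbot]; exact (RingHom.injective_iff_ker_eq_bot _).mp R.subtype_injective)
  obtain ⟨T, hT⟩ := hfin
  let τ : S ⧸ Q →+* S ⧸ Q := Ideal.quotientMap Q (σ ^ e) hQe.ge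
  have hτ (x : S) : τ (Ideal.Quotient.mk Q x) = Ideal.Quotient.mk Q ((σ ^ e) x) :=
    Ideal.quotientMap_mk
  have hτn (n : ℕ) (x : S) :
      (τ ^ n) (Ideal.Quotient.mk Q x) = Ideal.Quotient.mk Q ((σ ^ (e * n)) x) := by
    induction n generalizing x with
    | zero => rfl
    | succ n ih => rw [pow_succ, RingHom.mul_def, RingHom.comp_apply, hτ, ih, mul_add, mul_one,
        pow_add, RingHom.mul_def, RingHom.comp_apply]
  have hlift : LiftsPrimes (σR ^ e) τ := by
    refine liftsPrimes_of_finset (Ideal.quotientMap_injective' hQe.le)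
      ((Finset.range e ×ˢ T).image fun x ↦ Ideal.Quotient.mk Q ((σ ^ x.1) x.2))
      ((injective_iff_map_eq_zero _).mpr fun x hx ↦ ?_) (fun x ↦ ?_) ?_
    · have : x ∈ Q.comap R.subtype := Ideal.Quotient.eq_zero_iff_mem (a := (x : S)).mp hx
      rwa [hQR] at this
    · exact (hτ x).trans (congrArg _ (pow_algebraMap (fun x ↦ (hσR x).symm) e x))
    · set A : Subalgebra R (S ⧸ Q) := Algebra.adjoin R _
      have h : (⊤ : Subring S) ≤ A.toSubring.comap (Ideal.Quotient.mk Q) := by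
        rw [← hT, Subring.closure_le]
        rintro x (hx | ⟨t, ht, n, rfl⟩)
        · exact A.algebraMap_mem ⟨x, hx⟩
        · refine Algebra.subset_adjoin ⟨_, Finset.mem_image_of_mem _ (Finset.mk_mem_product
            (Finset.mem_range.mpr (n.mod_lt he)) ht), n / e, ?_⟩
          rw [hτn, ← RingHom.coe_pow, ← RingHom.comp_apply (σ ^ _), ← RingHom.mul_def, ← pow_add,
            Nat.div_add_mod]
      refine top_unique fun x _ ↦ ?_
      obtain ⟨x, rfl⟩ := Ideal.Quotient.mk_surjective x
      exact h trivial
  obtain ⟨r, hr, l, hl, H⟩ := hlift 1 one_ne_zero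
  refine ⟨r, hr, e * l, Nat.mul_pos he hl, fun d hd q hq hqd hqr ↦ ?_⟩
  obtain ⟨q', hq', hqd', hqR, -⟩ := H d hd q hq
    (by rw [← pow_mul, mul_comm]; exact Ideal.comap_pow_mul_eq hqd e)
    fun n ↦ by rw [← pow_mul, RingHom.coe_pow]; exact hqr _
  refine ⟨q'.comap (Ideal.Quotient.mk Q), inferInstance, Ideal.ext fun x ↦ ?_, ?_⟩
  · rw [Ideal.mem_comap, Ideal.mem_comap, mul_assoc, ← hτn, ← Ideal.mem_comap, hqd']
    rfl
  · rw [Ideal.comap_comap]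
    exact hqR
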